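/- Let Γ be a finite simple graph, let G = G(Γ) be the associated right-angled Artin group, and let N be a finitely generated full normal subgroup of G. Then N is hereditarily conjugacy separable: every finite index subgroup of N is conjugacy separable. In particular, N itself is conjugacy separable. -/

import Mathlib

/-- The defining relators of a right-angled Artin group: commutators of generators
corresponding to adjacent vertices. -/
def raagRels {V : Type} (Γ : SimpleGraph V) : Set (FreeGroup V) :=
  { r | ∃ v w : V, Γ.Adj v w ∧
      r = FreeGroup.of v * FreeGroup.of w * (FreeGroup.of v)⁻¹ * (FreeGroup.of w)⁻¹ }

/-- The right-angled Artin group associated to the simple graph `Γ`. -/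
abbrev RAAG {V : Type} (Γ : SimpleGraph V) : Type := PresentedGroup (raagRels Γ)

/-- The subgroup `G(Δ)` of the RAAG generated by the vertices in the set `S`. -/
def raagVertexSubgroup {V : Type} (Γ : SimpleGraph V) (S : Set V) : Subgroup (RAAG Γ) :=
  Subgroup.closure { x | ∃ v ∈ S, x = PresentedGroup.of (rels := raagRels Γ) v }

/-- A set of vertices `S` is a join of two (nonempty) subgraphs if it can be split into
two nonempty pieces every two vertices of which (one from each piece) are adjacent. -/
def IsJoinOfTwo {V : Type} (Γ : SimpleGraph V) (S : Set V) : Prop :=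
  ∃ A B : Set V, A.Nonempty ∧ B.Nonempty ∧ Disjoint A B ∧ A ∪ B = S ∧
    ∀ a ∈ A, ∀ b ∈ B, Γ.Adj a b

/-- `P : Fin k → Set V` is a join decomposition of `Γ` into join-indecomposable pieces. -/
def IsJoinDecomposition {V : Type} (Γ : SimpleGraph V) {k : ℕ} (P : Fin k → Set V) : Prop :=
  (∀ i, (P i).Nonempty) ∧ (∀ v : V, ∃! i, v ∈ P i) ∧
    (∀ i j, i ≠ j → ∀ a ∈ P i, ∀ b ∈ P j, Γ.Adj a b) ∧
    (∀ i, ¬ IsJoinOfTwo Γ (P i))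

/-- A subgroup `N` of the RAAG is full if for a join decomposition of `Γ` into
join-indecomposable pieces `Γ_1, …, Γ_k`, `N` intersects each `G(Γ_i)` nontrivially. -/
def IsFullSubgroup {V : Type} (Γ : SimpleGraph V) (N : Subgroup (RAAG Γ)) : Prop :=
  ∀ (k : ℕ) (P : Fin k → Set V), IsJoinDecomposition Γ P →
    ∀ i, N ⊓ raagVertexSubgroup Γ (P i) ≠ ⊥

/-- A group is abelian-by-finite if it has an abelian normal subgroup of finite index. -/
def AbelianByFinite (Q : Type) [Group Q] : Prop :=
  ∃ A : Subgroup Q, A.Normal ∧ A.FiniteIndex ∧ ∀ x y : A, x * y = y * x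

/-- A group is finite-by-abelian if it has a finite normal subgroup with abelian quotient,
equivalently a finite normal subgroup containing all commutators. -/
def FiniteByAbelian (Q : Type) [Group Q] : Prop :=
  ∃ F : Subgroup Q, F.Normal ∧ Finite F ∧ ∀ x y : Q, x * y * x⁻¹ * y⁻¹ ∈ F

/-- A group is conjugacy separable if any two non-conjugate elements remain non-conjugate
in some finite quotient. -/
def ConjugacySeparable (H : Type) [Group H] : Prop :=
  ∀ x y : H, ¬ IsConj x y →
    ∃ (Q : Type) (instQ : Group Q), letI := instQ
      Finite Q ∧ ∃ φ : H →* Q, ¬ IsConj (φ x) (φ y)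

/-!
A right-angled Coxeter group acts on a ring of formal power series, twisted by a finite quotient `Q`
of the group: a simple reflection `s` acts as a permutation matrix plus a term of degree one,
namely `s` times a coordinate projection. Modulo high degree, and with coefficients in the field
with two elements, this is a finite monoid of matrices. For `x` of minimal length in its conjugacy
class, the sum of the leading coefficients over the conjugates of `x` is a conjugacy invariant of
the finite image, and it detects which elements of `Q` lift to elements conjugating `y` to `x`.
Hence in right-angled Coxeter groups, and in their finite index subgroups, conjugation in a suitable
finite quotient lifts to conjugation in the group, up to an error in a prescribed finite index
subgroup. By Davis and Januszkiewicz this covers right-angled Artin groups.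

A subgroup `K` of such a group `G` is then conjugacy separable as soon as `K * C(y)` is profinitely
closed for all `y`. Let `K` have finite index in the finitely generated normal subgroup `N`, and let
`C ≤ K` be of finite index and characteristic in `N`. If killing the generator `v` moves some
element of `N`, then every coset of `N` meets both sides of a half-space of the splitting of `G`
over the link of `v`, so that a path in the Cayley graph of `N` crosses the wall near every point;
thus `N * ⟨link v⟩`, and with it `C * ⟨link v⟩`, has finite index. Since `⟨link v⟩` centralizes `v`,
the group `G ⧸ C` is central-by-finite, and `K * C(y)` is profinitely closed. Generators whose
killing moves no element of `N` are discarded first.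
-/

/-! ### Profinitely closed subsets and conjugacy separability -/

section FiniteIndex

open scoped Pointwise

variable {G : Type*} [Group G]

theorem isFiniteRelIndex_iff_exists_finite_subset_mul {C N : Subgroup G} :
    C.IsFiniteRelIndex N ↔ ∃ F : Set G, F.Finite ∧ (N : Set G) ⊆ F * C := by
  constructor
  · intro h
    have : Finite (N ⧸ C.subgroupOf N) := Nat.finite_of_card_ne_zero h.relIndex_ne_zero
    refine ⟨_, Set.finite_range fun q : N ⧸ C.subgroupOf N ↦ (q.out : G), fun n hn ↦ ?_⟩
    obtain ⟨c, hc⟩ := QuotientGroup.mk_out_eq_mul (C.subgroupOf N) ⟨n, hn⟩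
    refine ⟨_, ⟨(⟨n, hn⟩ : N), rfl⟩, (c : G)⁻¹, C.inv_mem c.2, ?_⟩
    simp only [hc, Subgroup.coe_mul, mul_inv_cancel_right]
  · rintro ⟨F, hF, hN⟩
    have := hF.to_subtype
    choose f hfF c hc hfc using fun n : N ↦ hN n.2
    have hinj : Function.Injective fun q : N ⧸ C.subgroupOf N ↦ (⟨f q.out, hfF _⟩ : F) := by
      intro p q hpq
      rw [← p.out_eq', ← q.out_eq', QuotientGroup.eq, Subgroup.mem_subgroupOf, Subgroup.coe_mul,
        Subgroup.coe_inv, ← hfc, ← hfc q.out, show f p.out = f q.out from congrArg Subtype.val hpq]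
      simpa [mul_assoc] using C.mul_mem (C.inv_mem (hc p.out)) (hc q.out)
    have := Finite.of_injective _ hinj
    exact ⟨(C.subgroupOf N).index_ne_zero_of_finite⟩

theorem finiteIndex_iff_exists_finite_mul_eq_univ {J : Subgroup G} :
    J.FiniteIndex ↔ ∃ F : Set G, F.Finite ∧ F * (J : Set G) = Set.univ := by
  simp only [← Subgroup.isFiniteRelIndex_top_iff, isFiniteRelIndex_iff_exists_finite_subset_mul,
    Subgroup.coe_top, Set.univ_subset_iff]

theorem finiteIndex_sup_of_isFiniteRelIndex {C N H : Subgroup G} [N.Normal]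
    [hC : C.IsFiniteRelIndex N] [hH : (N ⊔ H).FiniteIndex] : (C ⊔ H).FiniteIndex := by
  obtain ⟨E, hE, hEN⟩ := isFiniteRelIndex_iff_exists_finite_subset_mul.1 hC
  obtain ⟨F, hF, hFH⟩ := finiteIndex_iff_exists_finite_mul_eq_univ.1 hH
  refine finiteIndex_iff_exists_finite_mul_eq_univ.2 ⟨F * E, hF.mul hE, ?_⟩
  rw [← Set.univ_subset_iff]
  calc Set.univ = F * ((N : Set G) * (H : Set G)) := by rw [← Subgroup.normal_mul, hFH]
    _ ⊆ F * (E * (C : Set G) * (H : Set G)) :=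
      Set.mul_subset_mul_left (Set.mul_subset_mul_right hEN)
    _ = F * E * ((C : Set G) * (H : Set G)) := by simp only [mul_assoc]
    _ ⊆ F * E * ↑(C ⊔ H) := Set.mul_subset_mul_left (Subgroup.mul_subset
      (SetLike.coe_subset_coe.2 le_sup_left) (SetLike.coe_subset_coe.2 le_sup_right))

theorem finiteIndex_center_of_forall_finiteIndex_centralizer {S : Set G} (hfin : S.Finite)
    (hgen : Subgroup.closure S = ⊤) (h : ∀ s ∈ S, (Subgroup.centralizer {s}).FiniteIndex) :
    (Subgroup.center G).FiniteIndex := by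
  have := hfin.to_subtype
  rw [Subgroup.center_eq_infi' hgen]
  exact Subgroup.finiteIndex_iInf fun s ↦ h s s.2

theorem finiteIndex_center_map {H : Type*} [Group H] {f : G →* H} (hf : Function.Surjective f)
    [hZ : (Subgroup.center G).FiniteIndex] : (Subgroup.center H).FiniteIndex := by
  have hle : Subgroup.center G ≤ (Subgroup.center H).comap f := fun z hz ↦ by
    refine Subgroup.mem_comap.2 (Subgroup.mem_center_iff.2 (hf.forall.2 fun g ↦ ?_))
    rw [← map_mul, ← map_mul, Subgroup.mem_center_iff.1 hz]
  exact ⟨Subgroup.index_comap_of_surjective _ hf ▸ (Subgroup.finiteIndex_of_le hle).index_ne_zero⟩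

theorem exists_characteristic_finiteIndex_le [Group.FG G] (K : Subgroup G) [K.FiniteIndex] :
    ∃ C ≤ K, C.Characteristic ∧ C.FiniteIndex := by
  have : Finite (G →* Equiv.Perm (G ⧸ K)) := by
    obtain ⟨S, hS⟩ := Group.fg_def.1 ‹Group.FG G›
    exact Finite.of_injective (fun f (s : S) ↦ f s) fun f g h ↦
      MonoidHom.eq_of_eqOn_dense hS fun s hs ↦ congrFun h ⟨s, hs⟩
  refine ⟨⨅ f : G →* Equiv.Perm (G ⧸ K), f.ker, ?_, ?_, ?_⟩
  · refine (iInf_le _ (MulAction.toPermHom G (G ⧸ K))).trans ?_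
    rw [← Subgroup.normalCore_eq_ker]
    exact K.normalCore_le
  · refine Subgroup.characteristic_iff_le_comap.2 fun φ x hx ↦ ?_
    simp only [Subgroup.mem_comap, Subgroup.mem_iInf] at hx ⊢
    exact fun f ↦ hx (f.comp φ.toMonoidHom)
  · exact Subgroup.finiteIndex_iInf fun f ↦ inferInstance

end FiniteIndex

section ProfinitelyClosed

open scoped Pointwise IsMulCommutative

variable {G H : Type*} [Group G] [Group H]

/-- A subset of a group is profinitely closed if every element outside it is separated from it
by a homomorphism to a finite group, here the quotient by a normal subgroup `L`. -/
def ProfinitelyClosed (S : Set G) : Prop :=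
  ∀ g ∉ S, ∃ L : FiniteIndexNormalSubgroup G, ∀ s ∈ S, s⁻¹ * g ∉ L

theorem ProfinitelyClosed.preimage {S : Set H} (hS : ProfinitelyClosed S) (f : G →* H) :
    ProfinitelyClosed (f ⁻¹' S) := by
  intro g hg
  obtain ⟨L, hL⟩ := hS (f g) hg
  refine ⟨L.comap f, fun s hs h ↦ hL (f s) hs ?_⟩
  rw [← map_inv, ← map_mul]
  exact h

theorem profinitelyClosed_of_finite [Group.ResiduallyFinite G] {S : Set G} (hS : S.Finite) :
    ProfinitelyClosed S := by
  induction S, hS using Set.Finite.induction_on with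
  | empty => exact fun g _ ↦ ⟨.ofSubgroup ⊤, fun s hs ↦ hs.elim⟩
  | @insert a S _ _ ih =>
    intro g hg
    rw [Set.mem_insert_iff, not_or] at hg
    obtain ⟨L, hL⟩ := ih g hg.2
    obtain ⟨M, hM⟩ := Group.exists_finiteIndexNormalSubgroup_notMem (a⁻¹ * g)
      fun h ↦ hg.1 (inv_mul_eq_one.1 h).symm
    refine ⟨M ⊓ L, Set.forall_mem_insert.2 ⟨fun h ↦ hM h.1, fun s hs h ↦ hL s hs h.2⟩⟩

theorem residuallyFinite_of_fg_commGroup (A : Type*) [CommGroup A] [Group.FG A] :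
    Group.ResiduallyFinite A := by
  refine Group.residuallyFinite_iff_exists_finiteIndex.2 fun z hz ↦ ?_
  obtain ⟨c, hc⟩ := CharacterModule.exists_character_apply_ne_zero_of_ne_zero
    (A := Additive A) (a := Additive.ofMul z) (ofMul_eq_zero.not.2 hz)
  let φ : A →* Multiplicative (AddCircle (1 : ℚ)) := AddMonoidHom.toMultiplicativeRight c
  have htors : IsMulTorsion (A ⧸ φ.ker) := by
    intro q
    obtain ⟨a, rfl⟩ := QuotientGroup.mk_surjective q
    obtain ⟨r, hr⟩ := QuotientAddGroup.mk_surjective (c (Additive.ofMul a))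
    refine isOfFinOrder_iff_pow_eq_one.2 ⟨r.den, r.den_pos, ?_⟩
    have hφ : φ a = Multiplicative.ofAdd (r : AddCircle (1 : ℚ)) :=
      congrArg Multiplicative.ofAdd hr.symm
    rw [← QuotientGroup.mk_pow, QuotientGroup.eq_one_iff, MonoidHom.mem_ker, map_pow, hφ,
      ← ofAdd_nsmul, ← QuotientAddGroup.mk_nsmul, ofAdd_eq_one, QuotientAddGroup.eq_zero_iff]
    exact ⟨r.num, by simp [mul_comm, Rat.mul_den_eq_num]⟩
  have := CommGroup.finite_of_fg_isMulTorsion _ htors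
  exact ⟨φ.ker, Subgroup.finiteIndex_of_finite_quotient, fun h ↦ hc (ofAdd_eq_one.1 h)⟩

theorem residuallyFinite_of_finiteIndex_center [Group.FG G] [(Subgroup.center G).FiniteIndex] :
    Group.ResiduallyFinite G := by
  have := residuallyFinite_of_fg_commGroup (Subgroup.center G)
  refine Group.residuallyFinite_iff_exists_finiteIndex.2 fun g hg ↦ ?_
  by_cases hgZ : g ∈ Subgroup.center G
  · obtain ⟨B, hB, hgB⟩ := Group.residuallyFinite_iff_exists_finiteIndex.1 this ⟨g, hgZ⟩
      fun h ↦ hg (congrArg Subtype.val h)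
    refine ⟨B.map (Subgroup.center G).subtype, ⟨?_⟩, ?_⟩
    · rw [Subgroup.index_map_subtype]
      exact mul_ne_zero hB.index_ne_zero Subgroup.FiniteIndex.index_ne_zero
    · rintro ⟨b, hb, rfl⟩
      exact hgB hb
  · exact ⟨_, inferInstance, hgZ⟩

theorem profinitelyClosed_finite_mul_of_finiteIndex_center [Group.FG G]
    [(Subgroup.center G).FiniteIndex] {F : Set G} (hF : F.Finite) (D : Subgroup G) :
    ProfinitelyClosed (F * (D : Set G)) := by
  let E := D ⊓ Subgroup.center G
  have : E.Normal := ⟨fun z hz g ↦ by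
    rwa [Subgroup.mem_center_iff.1 hz.2 g, mul_inv_cancel_right]⟩
  let π := QuotientGroup.mk' E
  have := finiteIndex_center_map (QuotientGroup.mk'_surjective E)
  have := residuallyFinite_of_finiteIndex_center (G := G ⧸ E)
  have hD : (π '' D).Finite := by
    have hindex : π.ker.relIndex D ≠ 0 := by
      rw [QuotientGroup.ker_mk', Subgroup.inf_relIndex_left]
      exact Subgroup.FiniteIndex.index_ne_zero
    rw [Subgroup.relIndex_ker] at hindex
    exact Nat.finite_of_card_ne_zero hindex
  have hpre : F * (D : Set G) = π ⁻¹' (π '' F * π '' D) := by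
    refine subset_antisymm ?_ ?_
    · rw [← Set.image_mul]
      exact Set.subset_preimage_image _ _
    · rintro g ⟨_, ⟨f, hf, rfl⟩, _, ⟨d, hd, rfl⟩, hfd⟩
      have hmem : (f * d)⁻¹ * g ∈ E := QuotientGroup.eq.1 ((map_mul π f d).trans hfd)
      exact ⟨f, hf, f⁻¹ * g, by simpa [mul_assoc] using D.mul_mem hd hmem.1,
        mul_inv_cancel_left f g⟩
  rw [hpre]
  exact (profinitelyClosed_of_finite ((hF.image π).mul hD)).preimage π

/-- `K * D` is the preimage of the product of a finite set and a subgroup of `G ⧸ C`. -/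
theorem profinitelyClosed_mul_of_finiteIndex_center_quotient [Group.FG G] {C K : Subgroup G}
    [C.Normal] [(Subgroup.center (G ⧸ C)).FiniteIndex] (hCK : C ≤ K)
    [hC : C.IsFiniteRelIndex K] (D : Subgroup G) :
    ProfinitelyClosed ((K : Set G) * (D : Set G)) := by
  let π := QuotientGroup.mk' C
  have hK : (π '' K).Finite := by
    have hindex := hC.relIndex_ne_zero
    rw [← QuotientGroup.ker_mk' C, Subgroup.relIndex_ker] at hindex
    exact Nat.finite_of_card_ne_zero hindex
  have hpre : (K : Set G) * (D : Set G) = π ⁻¹' (π '' K * (D.map π : Set (G ⧸ C))) := by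
    refine subset_antisymm ?_ ?_
    · rw [Subgroup.coe_map, ← Set.image_mul]
      exact Set.subset_preimage_image _ _
    · rintro g ⟨_, ⟨k, hk, rfl⟩, _, ⟨d, hd, rfl⟩, hkd⟩
      have hmem : g * (k * d)⁻¹ ∈ C := by
        rw [← QuotientGroup.ker_mk' C, MonoidHom.mem_ker, map_mul, map_inv, map_mul]
        exact mul_inv_eq_one.2 hkd.symm
      exact ⟨g * d⁻¹, by simpa [mul_assoc] using K.mul_mem (hCK hmem) hk, d, hd,
        inv_mul_cancel_right g d⟩
  rw [hpre]
  exact (profinitelyClosed_finite_mul_of_finiteIndex_center hK _).preimage π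

end ProfinitelyClosed

section ConjugacySeparability

open scoped Pointwise

/-- There is a finite quotient `G ⧸ L` such that, whenever `g` conjugates `y` to `x` modulo `L`,
some element of the coset `g * H` conjugates `y` to `x`. -/
def ConjugatorsLift {G : Type*} [Group G] (H : Subgroup G) (x y : G) : Prop :=
  ∃ L : FiniteIndexNormalSubgroup G,
    ∀ g, g * y * g⁻¹ * x⁻¹ ∈ L → ∃ k, k * y * k⁻¹ = x ∧ g⁻¹ * k ∈ H

/-- Conjugacy separability of `G` together with Minasyan's centralizer condition. -/
def LiftsConjugators (G : Type*) [Group G] : Prop :=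
  ∀ (H : Subgroup G) [H.FiniteIndex] (x y : G), ConjugatorsLift H x y

/-- A group is hereditarily conjugacy separable if all its finite index subgroups are conjugacy
separable. -/
def HereditarilyConjugacySeparable (G : Type) [Group G] : Prop :=
  ∀ K : Subgroup G, K.FiniteIndex → ConjugacySeparable K

namespace ConjugatorsLift

variable {G : Type*} [Group G] {H : Subgroup G} {x y : G}

theorem of_monoidHom {A : Type*} [Monoid A] [Finite A] (φ : G →* A)
    (h : ∀ g, φ (g * y * g⁻¹) = φ x → ∃ k, k * y * k⁻¹ = x ∧ g⁻¹ * k ∈ H) :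
    ConjugatorsLift H x y := by
  refine ⟨.ofSubgroup φ.toHomUnits.ker, fun g hg ↦ h g ?_⟩
  have hker : φ.toHomUnits (g * y * g⁻¹ * x⁻¹) = 1 := hg
  rw [map_mul, map_inv, mul_inv_eq_one] at hker
  exact congrArg Units.val hker

theorem mono {H' : Subgroup G} (h : ConjugatorsLift H' x y) (hH : H' ≤ H) :
    ConjugatorsLift H x y :=
  h.imp fun _ hL g hg ↦ (hL g hg).imp fun _ ↦ And.imp_right (hH ·)

theorem symm [hH : H.Normal] (h : ConjugatorsLift H y x) : ConjugatorsLift H x y := by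
  obtain ⟨L, hL⟩ := h
  refine ⟨L, fun g hg ↦ ?_⟩
  have hconj : g⁻¹ * x * g⁻¹⁻¹ * y⁻¹ = g⁻¹ * (g * y * g⁻¹ * x⁻¹)⁻¹ * g⁻¹⁻¹ := by group
  obtain ⟨k, hk, hgk⟩ := hL g⁻¹ (hconj ▸ L.isNormal'.conj_mem _ (inv_mem hg) g⁻¹)
  have hgk' : k * (g⁻¹⁻¹ * k)⁻¹ * k⁻¹ = g⁻¹ * k⁻¹ := by group
  exact ⟨k⁻¹, by rw [← hk]; group, hgk' ▸ hH.conj_mem _ (inv_mem hgk) k⟩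

theorem of_conj [hH : H.Normal] (a b : G) (h : ConjugatorsLift H (a * x * a⁻¹) (b * y * b⁻¹)) :
    ConjugatorsLift H x y := by
  obtain ⟨L, hL⟩ := h
  refine ⟨L, fun g hg ↦ ?_⟩
  have hconj : a * g * b⁻¹ * (b * y * b⁻¹) * (a * g * b⁻¹)⁻¹ * (a * x * a⁻¹)⁻¹ =
      a * (g * y * g⁻¹ * x⁻¹) * a⁻¹ := by group
  obtain ⟨k, hk, hgk⟩ := hL (a * g * b⁻¹) (hconj ▸ L.isNormal'.conj_mem _ hg a)
  have hx : x = a⁻¹ * (a * x * a⁻¹) * a := by group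
  have hgk' : b⁻¹ * ((a * g * b⁻¹)⁻¹ * k) * b⁻¹⁻¹ = g⁻¹ * (a⁻¹ * k * b) := by group
  exact ⟨a⁻¹ * k * b, by rw [hx, ← hk]; group, hgk' ▸ hH.conj_mem _ hgk b⁻¹⟩

end ConjugatorsLift

theorem LiftsConjugators.of_injective {G W : Type*} [Group G] [Group W] (hW : LiftsConjugators W)
    {f : G →* W} (hf : Function.Injective f) [hrange : f.range.FiniteIndex] :
    LiftsConjugators G := by
  intro H hH x y
  have : (H.map f).FiniteIndex := ⟨by
    rw [Subgroup.index_map_of_injective H hf]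
    exact mul_ne_zero hH.index_ne_zero hrange.index_ne_zero⟩
  obtain ⟨L, hL⟩ := hW (H.map f) (f x) (f y)
  refine ⟨L.comap f, fun g hg ↦ ?_⟩
  obtain ⟨k, hk, h, hh, hgk⟩ := hL (f g)
    (by simpa using (show f (g * y * g⁻¹ * x⁻¹) ∈ L from hg))
  obtain rfl : f (g * h) = k := by rw [map_mul, hgk, mul_inv_cancel_left]
  exact ⟨g * h, hf (by simpa using hk), by simpa using hh⟩

theorem LiftsConjugators.exists_forall_conj_mul_inv_notMem {G : Type*} [Group G]
    (hG : LiftsConjugators G) {K : Subgroup G} {x y : G}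
    (hK : ProfinitelyClosed ((K : Set G) * (Subgroup.centralizer ({y} : Set G) : Set G)))
    (hxy : ∀ k ∈ K, k * y * k⁻¹ ≠ x) :
    ∃ L : FiniteIndexNormalSubgroup G, ∀ k ∈ K, k * y * k⁻¹ * x⁻¹ ∉ L := by
  by_cases hconj : ∃ g, g * y * g⁻¹ = x
  · obtain ⟨g, rfl⟩ := hconj
    have hg : g ∉ (K : Set G) * (Subgroup.centralizer ({y} : Set G) : Set G) := by
      rintro ⟨k, hk, d, hd, rfl⟩
      refine hxy k hk ?_
      rw [SetLike.mem_coe, Subgroup.mem_centralizer_singleton_iff] at hd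
      simp only [mul_assoc k d y, hd]
      group
    obtain ⟨M, hM⟩ := hK g hg
    obtain ⟨L, hL⟩ := hG M.toSubgroup (g * y * g⁻¹) y
    refine ⟨L, fun k hk hkL ↦ ?_⟩
    obtain ⟨c, hc, hkc⟩ := hL k hkL
    have hcg : c⁻¹ * g ∈ Subgroup.centralizer {y} := by
      rw [Subgroup.mem_centralizer_singleton_iff, mul_assoc, mul_inv_eq_iff_eq_mul.1 hc.symm]
      group
    refine hM (k * (c⁻¹ * g)) ⟨k, hk, _, hcg, rfl⟩ ?_
    have := M.isNormal'.conj_mem _ hkc (g⁻¹ * c)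
    rwa [show (k * (c⁻¹ * g))⁻¹ * g = g⁻¹ * c * (k⁻¹ * c) * (g⁻¹ * c)⁻¹ by group]
  · obtain ⟨L, hL⟩ := hG ⊤ x y
    exact ⟨L, fun k _ hkL ↦ hconj ((hL k hkL).imp fun _ ↦ And.left)⟩

theorem LiftsConjugators.conjugacySeparable_subgroup {G : Type} [Group G] (hG : LiftsConjugators G)
    {K : Subgroup G}
    (hK : ∀ y, ProfinitelyClosed ((K : Set G) * (Subgroup.centralizer ({y} : Set G) : Set G))) :
    ConjugacySeparable K := by
  intro x y hxy
  obtain ⟨L, hL⟩ := hG.exists_forall_conj_mul_inv_notMem (hK y) (x := x) fun k hk h ↦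
    hxy (isConj_comm.1 (isConj_iff.2 ⟨⟨k, hk⟩, Subtype.ext h⟩))
  let φ : K →* G ⧸ L.toSubgroup := (QuotientGroup.mk' L.toSubgroup).comp K.subtype
  refine ⟨φ.range, inferInstance, inferInstance, φ.rangeRestrict, fun h ↦ ?_⟩
  obtain ⟨⟨_, k, rfl⟩, hk⟩ := isConj_iff.1 (isConj_comm.1 h)
  refine hL k k.2 (L.mem_toSubgroup_iff.1 ?_)
  rw [← QuotientGroup.ker_mk' L.toSubgroup, MonoidHom.mem_ker, map_mul, map_inv, mul_inv_eq_one]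
  exact congrArg Subtype.val hk

theorem ConjugacySeparable.of_mulEquiv {A B : Type} [Group A] [Group B]
    (hB : ConjugacySeparable B) (e : A ≃* B) : ConjugacySeparable A := by
  intro x y hxy
  obtain ⟨Q, instQ, hQ, φ, hφ⟩ := hB (e x) (e y) fun h ↦
    hxy (by simpa using e.symm.toMonoidHom.map_isConj h)
  exact ⟨Q, instQ, hQ, φ.comp e.toMonoidHom, hφ⟩

theorem HereditarilyConjugacySeparable.of_mulEquiv {A B : Type} [Group A] [Group B]
    (hB : HereditarilyConjugacySeparable B) (e : A ≃* B) : HereditarilyConjugacySeparable A := by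
  intro K hK
  have : (K.map e.toMonoidHom).FiniteIndex := ⟨by
    exact (Subgroup.index_map_equiv K e).trans_ne hK.index_ne_zero⟩
  exact (hB _ this).of_mulEquiv (e.subgroupMap K)

theorem HereditarilyConjugacySeparable.conjugacySeparable {G : Type} [Group G]
    (hG : HereditarilyConjugacySeparable G) : ConjugacySeparable G :=
  (hG ⊤ inferInstance).of_mulEquiv Subgroup.topEquiv.symm

end ConjugacySeparability

/-! ### Right-angled Coxeter groups -/

section ContractedAlgebra

/-- Two-sided ideals of a monoid. -/
structure MonoidIdeal (M : Type*) [Monoid M] where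
  /-- The underlying set of the ideal. -/
  carrier : Set M
  mul_mem_left : ∀ (a : M) {b : M}, b ∈ carrier → a * b ∈ carrier
  mul_mem_right : ∀ {a : M} (b : M), a ∈ carrier → a * b ∈ carrier

namespace MonoidIdeal

variable {M : Type*} [Monoid M] (J : MonoidIdeal M)

/-- The ideal of elements supported on `J` in the monoid algebra over the field with two
elements. -/
noncomputable def algebraIdeal : TwoSidedIdeal (MonoidAlgebra (ZMod 2) M) :=
  .mk' {a | ∀ m ∉ J.carrier, a.coeff m = 0}
    (fun _ _ ↦ rfl)
    (fun {a b} ha hb m hm ↦ by rw [MonoidAlgebra.coeff_add, Finsupp.add_apply, ha m hm, hb m hm,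
      add_zero])
    (fun {a} ha m hm ↦ by rw [MonoidAlgebra.coeff_neg, Finsupp.neg_apply, ha m hm, neg_zero])
    (fun {a b} hb m hm ↦ by
      classical
      by_contra h
      obtain ⟨u, -, v, hv, rfl⟩ := Finset.mem_mul.1
        (MonoidAlgebra.support_coeff_mul_subset a b (Finsupp.mem_support_iff.2 h))
      exact Finsupp.mem_support_iff.1 hv (hb v fun hvJ ↦ hm (J.mul_mem_left u hvJ)))
    (fun {a b} ha m hm ↦ by
      classical
      by_contra h
      obtain ⟨u, hu, v, -, rfl⟩ := Finset.mem_mul.1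
        (MonoidAlgebra.support_coeff_mul_subset a b (Finsupp.mem_support_iff.2 h))
      exact Finsupp.mem_support_iff.1 hu (ha u fun huJ ↦ hm (J.mul_mem_right v huJ)))

theorem mem_algebraIdeal {a : MonoidAlgebra (ZMod 2) M} :
    a ∈ J.algebraIdeal ↔ ∀ m ∉ J.carrier, a.coeff m = 0 :=
  TwoSidedIdeal.mem_mk' ..

/-- The contracted monoid algebra of `M` relative to `J`, over the field with two elements: the
elements of `J` are identified with zero. -/
abbrev ContractedAlgebra : Type _ := J.algebraIdeal.ringCon.Quotient

/-- The image of a monoid element in the contracted algebra. -/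
noncomputable def of : M →* J.ContractedAlgebra :=
  J.algebraIdeal.ringCon.mk'.toMonoidHom.comp (MonoidAlgebra.of (ZMod 2) M)

theorem of_eq_zero {m : M} (hm : m ∈ J.carrier) : J.of m = 0 := by
  refine J.algebraIdeal.ringCon.eq.2 (J.mem_algebraIdeal.2 fun m' hm' ↦ ?_)
  exact Finsupp.single_eq_of_ne fun h ↦ hm' (h ▸ hm)

theorem add_self_eq_zero (a : J.ContractedAlgebra) : a + a = 0 := by
  induction a using Quotient.inductionOn with
  | h a =>
    refine congrArg J.algebraIdeal.ringCon.mk' (?_ : a + a = 0)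
    ext m
    exact CharTwo.add_self_eq_zero _

theorem addHom_ext {A : Type*} [AddMonoid A] {f g : J.ContractedAlgebra →+ A}
    (h : ∀ m, f (J.of m) = g (J.of m)) : f = g := by
  suffices f.comp J.algebraIdeal.ringCon.mk'.toAddMonoidHom =
      g.comp J.algebraIdeal.ringCon.mk'.toAddMonoidHom from
    AddMonoidHom.ext fun a ↦ Quotient.inductionOn a fun b ↦ DFunLike.congr_fun this b
  refine MonoidAlgebra.addHom_ext' fun m ↦ AddMonoidHom.ext fun r ↦ ?_
  obtain rfl | rfl : r = 0 ∨ r = 1 := by decide +revert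
  · rw [map_zero, map_zero]
  · exact h m

/-- The additive functional on the contracted algebra with values `c` on the monoid. -/
noncomputable def lift (c : M → ZMod 2) (hc : ∀ m ∈ J.carrier, c m = 0) :
    J.ContractedAlgebra →+ ZMod 2 :=
  J.algebraIdeal.ringCon.toAddCon.lift
    ((Finsupp.liftAddHom fun m ↦ AddMonoidHom.mulLeft (c m)).comp
      MonoidAlgebra.coeffAddEquiv.toAddMonoidHom) <| by
    intro a b hab
    have hsub : a - b ∈ J.algebraIdeal := (TwoSidedIdeal.rel_iff _ a b).1 hab
    refine sub_eq_zero.1 (.trans (map_sub _ a b).symm (Finset.sum_eq_zero fun m _ ↦ ?_))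
    by_cases hm : m ∈ J.carrier
    · exact mul_eq_zero_of_left (hc m hm) _
    · exact mul_eq_zero_of_right _ (J.mem_algebraIdeal.1 hsub m hm)

theorem lift_of {c : M → ZMod 2} (hc : ∀ m ∈ J.carrier, c m = 0) (m : M) :
    J.lift c hc (J.of m) = c m :=
  (Finsupp.liftAddHom_apply_single _ m 1).trans (mul_one _)

instance [Finite ↥J.carrierᶜ] : Finite J.ContractedAlgebra := by
  let coeffs : J.ContractedAlgebra → ↥J.carrierᶜ → ZMod 2 :=
    Quotient.lift (fun a m ↦ a.coeff m) fun a b hab ↦ funext fun m ↦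
      sub_eq_zero.1 (J.mem_algebraIdeal.1 ((TwoSidedIdeal.rel_iff _ a b).1 hab) m m.2)
  refine Finite.of_injective coeffs fun a b ↦ Quotient.inductionOn₂ a b fun a b hab ↦ ?_
  refine J.algebraIdeal.ringCon.eq.2 ((TwoSidedIdeal.rel_iff _ a b).2 ?_)
  exact J.mem_algebraIdeal.2 fun m hm ↦ sub_eq_zero.2 (congrFun hab ⟨m, hm⟩)

end MonoidIdeal

end ContractedAlgebra

section MagnusHom

open Matrix

/-- A Coxeter matrix is right-angled if all its off-diagonal entries are `2` or `∞` (encoded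
by `0`). -/
def IsRightAngled {B : Type*} (M : CoxeterMatrix B) : Prop :=
  ∀ s t, s ≠ t → M s t = 2 ∨ M s t = 0

theorem IsRightAngled.isLiftable {B G : Type*} [Monoid G] {M : CoxeterMatrix B}
    (hM : IsRightAngled M) {f : B → G} (hsq : ∀ s, f s * f s = 1)
    (hcomm : ∀ s t, M s t = 2 → Commute (f s) (f t)) : M.IsLiftable f := by
  intro s t
  obtain rfl | hst := eq_or_ne s t
  · rw [M.diagonal, pow_one, hsq]
  · obtain h | h := hM s t hst
    · rw [h, (hcomm s t h).mul_pow, sq, sq, hsq, hsq, one_mul]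
    · rw [h, pow_zero]

theorem commute_simple {B W : Type*} [Group W] {M : CoxeterMatrix B} (cs : CoxeterSystem M W)
    {s t : B} (h : M s t = 2) : Commute (cs.simple s) (cs.simple t) := by
  have hst := cs.simple_mul_simple_pow s t
  rw [h, sq, mul_eq_one_iff_eq_inv, _root_.mul_inv_rev, cs.inv_simple, cs.inv_simple] at hst
  exact hst

variable {B W : Type*} {M : CoxeterMatrix B} [Group W] (cs : CoxeterSystem M W) {Q : Type*}
  [Fintype Q] [DecidableEq Q]

variable (Q) in
/-- The monoid of triples `(w, d, a)`, where the degree `d` is at least the length of `w` and `a`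
is a matrix over the field with two elements indexed by `Q`. -/
def gradedMonoid : Submonoid (W × Multiplicative ℕ × Matrix Q Q (ZMod 2)) where
  carrier := {m | cs.length m.1 ≤ m.2.1.toAdd}
  one_mem' := cs.length_one.le
  mul_mem' {a b} ha hb := (cs.length_mul_le a.1 b.1).trans (add_le_add ha hb)

namespace gradedMonoid

variable {cs}

/-- The second component of a triple. -/
def degree (m : gradedMonoid cs Q) : ℕ := m.1.2.1.toAdd

theorem degree_mul (m m' : gradedMonoid cs Q) : degree (m * m') = degree m + degree m' := rfl

variable (cs Q) in
/-- The ideal of triples of degree greater than `n` or greater than the length of their group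
component. -/
def truncation (n : ℕ) : MonoidIdeal (gradedMonoid cs Q) where
  carrier := {m | n < degree m ∨ cs.length m.1.1 < degree m}
  mul_mem_left a b hb := hb.imp (lt_add_of_nonneg_of_lt (zero_le)) fun h ↦
    (cs.length_mul_le a.1.1 b.1.1).trans_lt (add_lt_add_of_le_of_lt a.2 h)
  mul_mem_right {a} b ha := ha.imp (lt_add_of_lt_of_nonneg · (zero_le)) fun h ↦
    (cs.length_mul_le a.1.1 b.1.1).trans_lt (add_lt_add_of_lt_of_le h b.2)

theorem finite_setOf_length_le [Finite B] (n : ℕ) : {w | cs.length w ≤ n}.Finite := by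
  refine ((List.finite_length_le B n).image cs.wordProd).subset fun w hw ↦ ?_
  obtain ⟨l, hl, rfl⟩ := cs.exists_isReduced w
  exact ⟨l, hl.eq.ge.trans hw, rfl⟩

instance [Finite B] (n : ℕ) : Finite ↥(truncation cs Q n).carrierᶜ := by
  have hfin : ({w | cs.length w ≤ n} ×ˢ {d : Multiplicative ℕ | d.toAdd ≤ n} ×ˢ
      (Set.univ : Set (Matrix Q Q (ZMod 2)))).Finite :=
    (finite_setOf_length_le n).prod (.prod (Set.finite_le_nat n) Set.finite_univ)
  refine ((hfin.preimage Subtype.val_injective.injOn).subset fun m hm ↦ ?_).to_subtype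
  obtain ⟨hn, -⟩ := not_or.1 hm
  exact ⟨m.2.trans (not_lt.1 hn), not_lt.1 hn, trivial⟩

variable [Group Q]

/-- The degree zero part of the image of the simple reflection `s` under the Magnus
homomorphism: the permutation matrix of left multiplication by `π s`. -/
def permPart (π : W →* Q) (s : B) : gradedMonoid cs Q :=
  ⟨(1, 1, (Equiv.mulLeft (π (cs.simple s))).toPEquiv.toMatrix), cs.length_one.le⟩

/-- The degree one part of the image of the simple reflection `s` under the Magnus homomorphism:
`s` times the projection onto the coordinates in `P s`. -/
noncomputable def projPart (P : B → Subgroup Q) (s : B) : gradedMonoid cs Q :=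
  ⟨(cs.simple s, .ofAdd 1, diagonal ((P s : Set Q).indicator 1)), (cs.length_simple s).le⟩

variable {π : W →* Q} {P : B → Subgroup Q} {s t : B}

theorem permPart_mul_self : permPart π s * permPart π s = (1 : gradedMonoid cs Q) := by
  have hs : π (cs.simple s) * π (cs.simple s) = 1 := by
    rw [← map_mul, cs.simple_mul_simple_self, map_one]
  refine Subtype.ext (Prod.ext (one_mul _) (Prod.ext rfl ?_))
  refine (PEquiv.toMatrix_toPEquiv_mul _ _).trans (Matrix.ext fun p q ↦ ?_)
  simp [permPart, ← mul_assoc, hs, Matrix.one_apply]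

theorem commute_permPart (h : M s t = 2) :
    Commute (permPart π s : gradedMonoid cs Q) (permPart π t) := by
  have hst : π (cs.simple s) * π (cs.simple t) = π (cs.simple t) * π (cs.simple s) :=
    (commute_simple cs h).map π
  refine Subtype.ext (Prod.ext rfl (Prod.ext rfl ?_))
  refine (PEquiv.toMatrix_toPEquiv_mul _ _).trans (.trans (Matrix.ext fun p q ↦ ?_)
    (PEquiv.toMatrix_toPEquiv_mul _ _).symm)
  simp [permPart, ← mul_assoc, hst]

theorem commute_projPart (h : M s t = 2) :
    Commute (projPart P s : gradedMonoid cs Q) (projPart P t) :=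
  Subtype.ext (Prod.ext (commute_simple cs h) (Prod.ext rfl (commute_diagonal _ _)))

theorem projPart_mul_self_mem_truncation (n : ℕ) :
    projPart P s * projPart P s ∈ (truncation cs Q n).carrier := by
  refine Or.inr (lt_of_eq_of_lt ?_ Nat.zero_lt_two)
  exact (congrArg cs.length (cs.simple_mul_simple_self s)).trans cs.length_one

theorem commute_permPart_projPart (h : π (cs.simple s) ∈ P t) :
    Commute (permPart π s : gradedMonoid cs Q) (projPart P t) := by
  have hP (p : Q) : (P t : Set Q).indicator (1 : Q → ZMod 2) (π (cs.simple s) * p) =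
      (P t : Set Q).indicator 1 p :=
    Set.indicator_const_eq_indicator_const ((P t).mul_mem_cancel_left h)
  refine Subtype.ext (Prod.ext ((one_mul _).trans (mul_one _).symm) (Prod.ext (mul_comm _ _) ?_))
  refine (PEquiv.toMatrix_toPEquiv_mul _ _).trans (.trans (Matrix.ext fun p q ↦ ?_)
    (PEquiv.mul_toMatrix_toPEquiv _ _).symm)
  simp [projPart, diagonal, hP, eq_inv_mul_iff_mul_eq]

theorem prod_map_projPart (P : B → Subgroup Q) (l : List B) :
    ((l.map (projPart P)).prod : gradedMonoid cs Q).1 = (cs.wordProd l, .ofAdd l.length,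
      diagonal ({q | ∀ s ∈ l, q ∈ P s}.indicator 1)) := by
  induction l with
  | nil => simp; rfl
  | cons s l ih =>
    rw [List.map_cons, List.prod_cons, Submonoid.coe_mul, ih]
    refine Prod.ext (cs.wordProd_cons s l).symm (Prod.ext (Nat.add_comm _ _) ?_)
    refine (diagonal_mul_diagonal _ _).trans (congrArg diagonal ?_)
    have hcons : {q | ∀ r ∈ s :: l, q ∈ P r} = (P s : Set Q) ∩ {q | ∀ r ∈ l, q ∈ P r} :=
      Set.ext fun q ↦ List.forall_mem_cons
    rw [hcons]
    exact Set.inter_indicator_one.symm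

theorem degree_prod_map_projPart (P : B → Subgroup Q) (l : List B) :
    degree ((l.map (projPart P)).prod : gradedMonoid cs Q) = l.length :=
  congrArg (fun m : W × Multiplicative ℕ × Matrix Q Q (ZMod 2) ↦ m.2.1.toAdd)
    (prod_map_projPart P l)

end gradedMonoid

open gradedMonoid

variable [Group Q] (π : W →* Q) (P : B → Subgroup Q)

theorem exists_magnusHom (hM : IsRightAngled M) (n : ℕ)
    (hP : ∀ s t, s = t ∨ M s t = 2 → π (cs.simple s) ∈ P t) :
    ∃ φ : W →* (truncation cs Q n).ContractedAlgebra, ∀ s, φ (cs.simple s) =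
      (truncation cs Q n).of (permPart π s) + (truncation cs Q n).of (projPart P s) := by
  set J := truncation cs Q n
  have hlift : M.IsLiftable fun s ↦ J.of (permPart π s) + J.of (projPart P s) := by
    refine hM.isLiftable (fun s ↦ ?_) fun s t hst ↦ ?_
    · have hcomm := (commute_permPart_projPart (cs := cs) (hP s s (.inl rfl))).map J.of
      rw [add_mul, mul_add, mul_add, ← hcomm.eq, ← map_mul, ← map_mul J.of (projPart P s),
        permPart_mul_self, J.of_eq_zero (projPart_mul_self_mem_truncation n), map_one, add_zero,
        add_assoc, J.add_self_eq_zero, add_zero]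
    · have hts : M t s = 2 := M.symmetric t s ▸ hst
      exact .add_left
        (.add_right ((commute_permPart hst).map J.of)
          ((commute_permPart_projPart (hP s t (.inr hst))).map J.of))
        (.add_right ((commute_permPart_projPart (hP t s (.inr hts))).symm.map J.of)
          ((commute_projPart hst).map J.of))
  exact ⟨cs.lift ⟨_, hlift⟩, cs.lift_apply_simple hlift⟩

/-- The triples of degree `n` whose group component is conjugated to `x` by an element `k` for
which the `κ * π k` diagonal entry of the matrix is nonzero. -/
def twistedConjClass (x : W) (n : ℕ) (κ : Q) : Set (gradedMonoid cs Q) :=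
  {m | degree m = n ∧ ∃ k, k * m.1.1 * k⁻¹ = x ∧ m.1.2.2 (κ * π k) (κ * π k) = 1}

variable {cs π P}

theorem permPart_mul_mem_twistedConjClass {x : W} {n : ℕ} {κ : Q} {s : B}
    {m : gradedMonoid cs Q} :
    permPart π s * m ∈ twistedConjClass cs π x n κ ↔
      m * permPart π s ∈ twistedConjClass cs π x n (π (cs.simple s) * κ) := by
  have hleft (p q : Q) : (permPart π s * m).1.2.2 p q = m.1.2.2 (π (cs.simple s) * p) q :=
    congrFun₂ (PEquiv.toMatrix_toPEquiv_mul _ _) p q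
  have hright (p q : Q) : (m * permPart π s).1.2.2 p q = m.1.2.2 p ((π (cs.simple s))⁻¹ * q) :=
    congrFun₂ (PEquiv.mul_toMatrix_toPEquiv _ _) p q
  have hone_mul : (permPart π s * m).1.1 = m.1.1 := one_mul _
  have hmul_one : (m * permPart π s).1.1 = m.1.1 := mul_one _
  simp only [twistedConjClass, Set.mem_ofPred_eq, hleft, hright, hone_mul, hmul_one, mul_assoc,
    inv_mul_cancel_left, degree_mul, add_comm]

theorem projPart_mul_mem_twistedConjClass
    (hP : ∀ s, ∀ q ∈ P s, Commute (π (cs.simple s)) q) {x : W} {n : ℕ} {κ : Q} {s : B}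
    {m : gradedMonoid cs Q} :
    projPart P s * m ∈ twistedConjClass cs π x n κ ↔
      m * projPart P s ∈ twistedConjClass cs π x n (π (cs.simple s) * κ) := by
  have hs : π (cs.simple s) * π (cs.simple s) = 1 := by
    rw [← map_mul, cs.simple_mul_simple_self, map_one]
  have hleft (q : Q) : (projPart P s * m).1.2.2 q q = 1 ↔ q ∈ P s ∧ m.1.2.2 q q = 1 := by
    refine (congrArg (· = 1) (diagonal_mul _ _ q q)).to_iff.trans ?_
    by_cases hq : q ∈ P s <;> simp [hq]
  have hright (q : Q) : (m * projPart P s).1.2.2 q q = 1 ↔ q ∈ P s ∧ m.1.2.2 q q = 1 := by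
    refine (congrArg (· = 1) (mul_diagonal _ _ q q)).to_iff.trans ?_
    by_cases hq : q ∈ P s <;> simp [hq]
  have hconj {q : Q} (hq : q ∈ P s) : π (cs.simple s) * q * π (cs.simple s) = q := by
    rw [(hP s q hq).eq, mul_assoc, hs, mul_one]
  refine and_congr (by rw [degree_mul, degree_mul, add_comm]) ⟨?_, ?_⟩
  · rintro ⟨k, rfl, hk⟩
    obtain ⟨hq, hm⟩ := (hleft _).1 hk
    have hk' : π (cs.simple s) * κ * π (k * cs.simple s) = κ * π k := by
      rw [map_mul, ← mul_assoc, mul_assoc _ κ, hconj hq]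
    refine ⟨k * cs.simple s, ?_, (hright _).2 (hk' ▸ ⟨hq, hm⟩)⟩
    simp only [projPart, Submonoid.coe_mul, Prod.fst_mul]
    group
  · rintro ⟨k, rfl, hk⟩
    obtain ⟨hq, hm⟩ := (hright _).1 hk
    have hk' : κ * π (k * cs.simple s) = π (cs.simple s) * κ * π k := by
      rw [← hconj hq, mul_assoc _ κ, ← mul_assoc _ _ (κ * π k), hs, one_mul, map_mul, mul_assoc]
    refine ⟨k * cs.simple s, ?_, (hleft _).2 (hk' ▸ ⟨hq, hm⟩)⟩
    simp only [projPart, Submonoid.coe_mul, Prod.fst_mul, _root_.mul_inv_rev, cs.inv_simple,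
      mul_assoc, cs.simple_mul_simple_cancel_left]

theorem disjoint_twistedConjClass_truncation {x : W}
    (hx : ∀ k, cs.length x ≤ cs.length (k * x * k⁻¹)) (κ : Q) :
    Disjoint (twistedConjClass cs π x (cs.length x) κ)
      (truncation cs Q (cs.length x)).carrier := by
  refine Set.disjoint_left.2 ?_
  rintro m ⟨hm, k, hk, -⟩ h
  have hmx : cs.length x ≤ cs.length m.1.1 := by
    have hkx : k⁻¹ * x * k⁻¹⁻¹ = m.1.1 := by rw [← hk]; group
    exact hkx ▸ hx k⁻¹
  exact h.elim hm.not_gt fun h ↦ (hmx.trans_lt h).ne hm.symm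

variable (π) in
/-- The sum of the coefficients of an element of the contracted algebra over the twisted conjugacy
class of `x`, where `x` has minimal length in its conjugacy class. -/
noncomputable def twistedTrace {x : W} (hx : ∀ k, cs.length x ≤ cs.length (k * x * k⁻¹)) (κ : Q) :
    (truncation cs Q (cs.length x)).ContractedAlgebra →+ ZMod 2 :=
  (truncation cs Q (cs.length x)).lift ((twistedConjClass cs π x (cs.length x) κ).indicator 1)
    fun _ hm ↦ Set.indicator_of_notMem
      (fun h ↦ Set.disjoint_left.1 (disjoint_twistedConjClass_truncation hx κ) h hm) _

section twistedTrace

variable {x : W} (hx : ∀ k, cs.length x ≤ cs.length (k * x * k⁻¹))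
  {φ : W →* (truncation cs Q (cs.length x)).ContractedAlgebra}

theorem twistedTrace_of (κ : Q) (m : gradedMonoid cs Q) :
    twistedTrace π hx κ ((truncation cs Q (cs.length x)).of m) =
      (twistedConjClass cs π x (cs.length x) κ).indicator 1 m :=
  MonoidIdeal.lift_of ..

theorem twistedTrace_magnusHom_simple_mul
    (hφ : ∀ s, φ (cs.simple s) = (truncation cs Q (cs.length x)).of (permPart π s) +
      (truncation cs Q (cs.length x)).of (projPart P s))
    (hP : ∀ s, ∀ q ∈ P s, Commute (π (cs.simple s)) q)
    (s : B) (κ : Q) (a : (truncation cs Q (cs.length x)).ContractedAlgebra) :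
    twistedTrace π hx κ (φ (cs.simple s) * a) =
      twistedTrace π hx (π (cs.simple s) * κ) (a * φ (cs.simple s)) := by
  suffices (twistedTrace π hx κ).comp (AddMonoidHom.mulLeft (φ (cs.simple s))) =
      (twistedTrace π hx (π (cs.simple s) * κ)).comp (AddMonoidHom.mulRight (φ (cs.simple s))) from
    DFunLike.congr_fun this a
  refine MonoidIdeal.addHom_ext _ fun m ↦ ?_
  simp only [AddMonoidHom.comp_apply, AddMonoidHom.coe_mulLeft, AddMonoidHom.coe_mulRight, hφ,
    add_mul, mul_add, ← map_mul, map_add, twistedTrace_of]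
  exact congrArg₂ (· + ·)
    (Set.indicator_const_eq_indicator_const permPart_mul_mem_twistedConjClass)
    (Set.indicator_const_eq_indicator_const (projPart_mul_mem_twistedConjClass hP))

theorem twistedTrace_magnusHom_mul
    (hφ : ∀ s, φ (cs.simple s) = (truncation cs Q (cs.length x)).of (permPart π s) +
      (truncation cs Q (cs.length x)).of (projPart P s))
    (hP : ∀ s, ∀ q ∈ P s, Commute (π (cs.simple s)) q) (g : W)
    (κ : Q) (a : (truncation cs Q (cs.length x)).ContractedAlgebra) :
    twistedTrace π hx κ (φ g * a) = twistedTrace π hx ((π g)⁻¹ * κ) (a * φ g) := by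
  induction g using cs.simple_induction_left generalizing κ a with
  | one => simp
  | mul_simple_left w s ih =>
    rw [map_mul φ, mul_assoc, twistedTrace_magnusHom_simple_mul hx hφ hP, mul_assoc, ih, map_mul π,
      _root_.mul_inv_rev, ← map_inv π (cs.simple s), cs.inv_simple, mul_assoc, mul_assoc]

theorem twistedTrace_of_mul_magnusHom_wordProd
    (hφ : ∀ s, φ (cs.simple s) = (truncation cs Q (cs.length x)).of (permPart π s) +
      (truncation cs Q (cs.length x)).of (projPart P s))
    (κ : Q) {l : List B} {u : gradedMonoid cs Q}
    (hu : degree u + l.length ≤ cs.length x) :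
    twistedTrace π hx κ ((truncation cs Q (cs.length x)).of u * φ (cs.wordProd l)) =
      (twistedConjClass cs π x (cs.length x) κ).indicator 1 (u * (l.map (projPart P)).prod) := by
  induction l generalizing u with
  | nil => rw [cs.wordProd_nil, map_one, mul_one, twistedTrace_of, List.map_nil, List.prod_nil,
      mul_one]
  | cons s l ih =>
    rw [List.length_cons] at hu
    have hperm : degree (u * permPart π s) = degree u := rfl
    have hproj : degree (u * projPart P s) = degree u + 1 := rfl
    have hlt : u * permPart π s * (l.map (projPart P)).prod ∉
        twistedConjClass cs π x (cs.length x) κ := fun h ↦ by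
      have hdeg := h.1
      rw [degree_mul, degree_prod_map_projPart, hperm] at hdeg
      lia
    rw [cs.wordProd_cons, map_mul φ, hφ, add_mul, mul_add, map_add, ← mul_assoc, ← mul_assoc,
      ← map_mul, ← map_mul, ih (by lia), ih (by lia), Set.indicator_of_notMem hlt, zero_add,
      List.map_cons, List.prod_cons, mul_assoc]

end twistedTrace

theorem conj_of_magnusHom_conj (hP : ∀ s, ∀ q ∈ P s, Commute (π (cs.simple s)) q)
    {x : W} (hx : ∀ k, cs.length x ≤ cs.length (k * x * k⁻¹))
    {φ : W →* (truncation cs Q (cs.length x)).ContractedAlgebra}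
    (hφ : ∀ s, φ (cs.simple s) = (truncation cs Q (cs.length x)).of (permPart π s) +
      (truncation cs Q (cs.length x)).of (projPart P s))
    {l : List B} (hl : l.length ≤ cs.length x) {g : W}
    (hg : φ (g * cs.wordProd l * g⁻¹) = φ x) :
    ∃ k, k * cs.wordProd l * k⁻¹ = x ∧ ∀ s ∈ l, (π g)⁻¹ * π k ∈ P s := by
  have htrace (κ : Q) {l : List B} (hl : l.length ≤ cs.length x) :
      twistedTrace π hx κ (φ (cs.wordProd l)) =
        (twistedConjClass cs π x (cs.length x) κ).indicator 1 (l.map (projPart P)).prod := by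
    have hdeg : degree (1 : gradedMonoid cs Q) + l.length ≤ cs.length x :=
      (Nat.zero_add _).trans_le hl
    simpa only [map_one, one_mul] using twistedTrace_of_mul_magnusHom_wordProd hx hφ κ hdeg
  obtain ⟨r, hr, hrx⟩ := cs.exists_isReduced x
  have hrlen : r.length = cs.length x := by rw [hrx, hr.eq]
  have hx_mem : (r.map (projPart P)).prod ∈ twistedConjClass cs π x (cs.length x) 1 := by
    refine ⟨(degree_prod_map_projPart P r).trans hrlen, 1, ?_⟩
    rw [prod_map_projPart, ← hrx]
    refine ⟨by group, (diagonal_apply_eq _ _).trans (Set.indicator_of_mem (fun s _ ↦ ?_) _)⟩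
    rw [map_one, one_mul]
    exact one_mem (P s)
  have hl_trace : twistedTrace π hx (π g)⁻¹ (φ (cs.wordProd l)) = 1 := calc
    _ = twistedTrace π hx 1 (φ g * (φ (cs.wordProd l) * φ g⁻¹)) := by
      rw [twistedTrace_magnusHom_mul hx hφ hP, mul_one, mul_assoc, ← map_mul φ g⁻¹,
        inv_mul_cancel, map_one, mul_one]
    _ = twistedTrace π hx 1 (φ (cs.wordProd r)) := by
      rw [← map_mul, ← map_mul, ← mul_assoc, hg, ← hrx]
    _ = 1 := by rw [htrace 1 hrlen.le, Set.indicator_of_mem hx_mem, Pi.one_apply]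
  have hl_mem : (l.map (projPart P)).prod ∈ twistedConjClass cs π x (cs.length x) (π g)⁻¹ :=
    Set.mem_of_indicator_ne_zero (by rw [← htrace _ hl, hl_trace]; exact one_ne_zero)
  obtain ⟨-, k, hk, hfix⟩ := hl_mem
  rw [prod_map_projPart] at hk hfix
  exact ⟨k, hk, Set.mem_of_indicator_ne_zero
    (((diagonal_apply_eq _ _).symm.trans hfix).trans_ne one_ne_zero)⟩

end MagnusHom

section RightAngledCoxeter

variable {B W : Type*} {M : CoxeterMatrix B} [Group W] (cs : CoxeterSystem M W)
  (hM : IsRightAngled M)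

/-- The retraction of a right-angled Coxeter group onto the special subgroup generated by `U`,
killing the simple reflections outside `U`. -/
noncomputable def specialRetraction (U : Set B) : W →* W :=
  cs.lift ⟨U.mulIndicator cs.simple, hM.isLiftable
    (fun s ↦ by by_cases hs : s ∈ U <;> simp [hs])
    fun s t hst ↦ by
      by_cases hs : s ∈ U <;> by_cases ht : t ∈ U <;> simp [hs, ht, commute_simple cs hst]⟩

variable {cs hM}

theorem specialRetraction_simple (U : Set B) (s : B) :
    specialRetraction cs hM U (cs.simple s) = U.mulIndicator cs.simple s :=
  cs.lift_apply_simple _ s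

theorem specialRetraction_specialRetraction (U U' : Set B) (w : W) :
    specialRetraction cs hM U (specialRetraction cs hM U' w) =
      specialRetraction cs hM (U ∩ U') w := by
  suffices (specialRetraction cs hM U).comp (specialRetraction cs hM U') =
      specialRetraction cs hM (U ∩ U') from DFunLike.congr_fun this w
  refine cs.ext_simple fun s ↦ ?_
  by_cases hU : s ∈ U <;> by_cases hU' : s ∈ U' <;> simp [specialRetraction_simple, hU, hU']

theorem specialRetraction_univ (w : W) : specialRetraction cs hM Set.univ w = w := by
  suffices specialRetraction cs hM Set.univ = MonoidHom.id W from DFunLike.congr_fun this w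
  exact cs.ext_simple fun s ↦ by simp [specialRetraction_simple]

theorem commute_simple_specialRetraction {U : Set B} {s : B} (hU : ∀ t ∈ U, t = s ∨ M s t = 2)
    (w : W) : Commute (cs.simple s) (specialRetraction cs hM U w) := by
  induction w using cs.simple_induction_left with
  | one => simp
  | mul_simple_left w t ih =>
    rw [map_mul, specialRetraction_simple]
    refine .mul_right ?_ ih
    by_cases ht : t ∈ U
    · rw [Set.mulIndicator_of_mem ht]
      obtain rfl | hst := hU t ht
      exacts [.refl _, commute_simple cs hst]
    · simp [ht]

variable (cs hM) in
theorem exists_finiteIndexNormalSubgroup_le_forall_specialRetraction_mem [Finite B]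
    (H : Subgroup W) [H.FiniteIndex] : ∃ N : FiniteIndexNormalSubgroup W, N.toSubgroup ≤ H ∧
      ∀ U, ∀ w ∈ N, specialRetraction cs hM U w ∈ N := by
  let N : Subgroup W := ⨅ U, H.normalCore.comap (specialRetraction cs hM U)
  have : N.Normal := Subgroup.normal_iInf_normal fun U ↦ inferInstance
  have : N.FiniteIndex := Subgroup.finiteIndex_iInf fun U ↦
    ⟨(H.normalCore.index_comap _).trans_ne
      Subgroup.isFiniteRelIndex_of_finiteIndex.relIndex_ne_zero⟩
  have hN {w : W} : w ∈ N ↔ ∀ U, specialRetraction cs hM U w ∈ H.normalCore := by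
    simp only [N, Subgroup.mem_iInf, Subgroup.mem_comap]
  refine ⟨.ofSubgroup N, fun w hw ↦ H.normalCore_le ?_, fun U w hw ↦ hN.2 fun U' ↦ ?_⟩
  · simpa only [specialRetraction_univ] using hN.1 hw Set.univ
  · rw [specialRetraction_specialRetraction]
    exact hN.1 hw _

variable (cs hM) in
/-- The image in `W ⧸ N` of the special subgroup generated by the simple reflections commuting
with `s`. -/
noncomputable def starSubgroup (N : Subgroup W) [N.Normal] (s : B) : Subgroup (W ⧸ N) :=
  (specialRetraction cs hM {t | t = s ∨ M s t = 2}).range.map (QuotientGroup.mk' N)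

variable {N : Subgroup W} [N.Normal]

theorem mk_simple_mem_starSubgroup {s t : B} (h : t = s ∨ M s t = 2) :
    QuotientGroup.mk' N (cs.simple t) ∈ starSubgroup cs hM N s :=
  ⟨_, ⟨cs.simple t, (specialRetraction_simple _ t).trans
    (Set.mulIndicator_of_mem (s := {t | t = s ∨ M s t = 2}) h _)⟩, rfl⟩

theorem commute_mk_simple_of_mem_starSubgroup {s : B} {q : W ⧸ N}
    (hq : q ∈ starSubgroup cs hM N s) : Commute (QuotientGroup.mk' N (cs.simple s)) q := by
  obtain ⟨_, ⟨w, rfl⟩, rfl⟩ := hq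
  exact (commute_simple_specialRetraction (fun _ ↦ id) w).map _

theorem exists_commute_wordProd_of_forall_mem_starSubgroup
    (hN : ∀ U, ∀ w ∈ N, specialRetraction cs hM U w ∈ N) {u : W} {l : List B}
    (hu : ∀ s ∈ l, QuotientGroup.mk' N u ∈ starSubgroup cs hM N s) :
    ∃ c, Commute c (cs.wordProd l) ∧ c⁻¹ * u ∈ N := by
  let ρ (s : B) : W →* W := specialRetraction cs hM {t | t = s ∨ M s t = 2}
  have hρ (s : B) (w : W) : ρ s (ρ s w) = ρ s w := by
    simp only [ρ, specialRetraction_specialRetraction, Set.inter_self]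
  have hρ_comm (s t : B) (w : W) : ρ s (ρ t w) = ρ t (ρ s w) := by
    simp only [ρ, specialRetraction_specialRetraction, Set.inter_comm]
  have hρN (s : B) {a b : W} (h : a⁻¹ * b ∈ N) : (ρ s a)⁻¹ * ρ s b ∈ N := by
    rw [← map_inv, ← map_mul]
    exact hN _ _ h
  suffices ∃ c, (∀ s ∈ l, ρ s c = c) ∧ c⁻¹ * u ∈ N by
    obtain ⟨c, hc, hcu⟩ := this
    refine ⟨c, .list_prod_right _ _ ?_, hcu⟩
    simp only [List.forall_mem_map]
    exact fun s hs ↦ hc s hs ▸ (commute_simple_specialRetraction (fun _ ↦ id) c).symm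
  induction l with
  | nil => exact ⟨u, by simp⟩
  | cons s l ih =>
    obtain ⟨hs, hl⟩ := List.forall_mem_cons.1 hu
    obtain ⟨c, hc, hcu⟩ := ih hl
    obtain ⟨_, ⟨w, rfl⟩, hw⟩ := hs
    have hwu : (ρ s w)⁻¹ * u ∈ N := QuotientGroup.eq.1 hw
    have huc : (ρ s u)⁻¹ * u ∈ N := by
      have huw := inv_mem (hρN s hwu)
      rw [hρ, mul_inv_rev, inv_inv] at huw
      simpa [mul_assoc] using mul_mem huw hwu
    refine ⟨ρ s c, List.forall_mem_cons.2 ⟨hρ s c, fun t ht ↦ by rw [hρ_comm, hc t ht]⟩, ?_⟩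
    simpa [mul_assoc] using mul_mem (hρN s hcu) huc

theorem conjugatorsLift_of_forall_length_le [Finite B] (hM : IsRightAngled M) (H : Subgroup W)
    [H.FiniteIndex] {x y : W} (hx : ∀ k, cs.length x ≤ cs.length (k * x * k⁻¹))
    (hyx : cs.length y ≤ cs.length x) : ConjugatorsLift H x y := by
  classical
  obtain ⟨N, hNH, hN⟩ :=
    exists_finiteIndexNormalSubgroup_le_forall_specialRetraction_mem cs hM H
  have := Fintype.ofFinite (W ⧸ N.toSubgroup)
  let π := QuotientGroup.mk' N.toSubgroup
  obtain ⟨φ, hφ⟩ := exists_magnusHom cs π (starSubgroup cs hM N.toSubgroup) hM (cs.length x)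
    fun s t hst ↦ mk_simple_mem_starSubgroup (hst.imp_right (M.symmetric t s ▸ ·))
  obtain ⟨l, hl, rfl⟩ := cs.exists_isReduced y
  refine .mono (.of_monoidHom φ fun g hg ↦ ?_) hNH
  obtain ⟨k, hk, hgk⟩ := conj_of_magnusHom_conj
    (fun s q hq ↦ commute_mk_simple_of_mem_starSubgroup hq) hx hφ (hl.eq.ge.trans hyx) hg
  simp only [← map_inv, ← map_mul] at hgk
  obtain ⟨c, hc, hcu⟩ := exists_commute_wordProd_of_forall_mem_starSubgroup hN hgk
  refine ⟨k * c⁻¹, ?_, ?_⟩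
  · calc k * c⁻¹ * cs.wordProd l * (k * c⁻¹)⁻¹ = k * (c⁻¹ * cs.wordProd l * c) * k⁻¹ := by group
      _ = x := by rw [hc.inv_mul_cancel, hk]
  · have hgkc : c * (c⁻¹ * (g⁻¹ * k)) * c⁻¹ = g⁻¹ * (k * c⁻¹) := by group
    exact hgkc ▸ N.isNormal'.conj_mem _ hcu c

theorem IsRightAngled.liftsConjugators [Finite B] (hM : IsRightAngled M) (cs : CoxeterSystem M W) :
    LiftsConjugators W := by
  have exists_min (x : W) :
      ∃ a, ∀ k, cs.length (a * x * a⁻¹) ≤ cs.length (k * (a * x * a⁻¹) * k⁻¹) := by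
    let ℓ (a : W) : ℕ := cs.length (a * x * a⁻¹)
    refine ⟨Function.argmin ℓ, fun k ↦ (Function.argmin_le ℓ (k * Function.argmin ℓ)).trans_eq ?_⟩
    exact congrArg cs.length (by group)
  intro H hH x y
  obtain ⟨a, ha⟩ := exists_min x
  obtain ⟨b, hb⟩ := exists_min y
  refine .mono (.of_conj a b ?_) H.normalCore_le
  obtain h | h := le_total (cs.length (b * y * b⁻¹)) (cs.length (a * x * a⁻¹))
  · exact conjugatorsLift_of_forall_length_le hM _ ha h
  · exact (conjugatorsLift_of_forall_length_le hM _ hb h).symm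

end RightAngledCoxeter

/-! ### Right-angled Artin groups -/

open scoped IsMulCommutative in
theorem finite_closure_of_commute_of_mul_self_eq_one {G : Type*} [Group G] {S : Set G}
    (hS : S.Finite) (hcomm : ∀ x ∈ S, ∀ y ∈ S, x * y = y * x) (hsq : ∀ x ∈ S, x * x = 1) :
    Finite (Subgroup.closure S) := by
  have := Subgroup.isMulCommutative_closure hcomm
  have : Group.FG (Subgroup.closure S) :=
    (Group.fg_iff_subgroup_fg _).2 ((Subgroup.fg_iff _).2 ⟨S, rfl, hS⟩)
  refine CommGroup.finite_of_fg_isMulTorsion _ fun x ↦ isOfFinOrder_iff_pow_eq_one.2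
    ⟨2, two_pos, ?_⟩
  suffices powMonoidHom 2 = (1 : Subgroup.closure S →* Subgroup.closure S) from
    DFunLike.congr_fun this x
  refine MonoidHom.eq_of_eqOn_dense (Subgroup.closure_closure_coe_preimage (k := S)) fun y hy ↦ ?_
  exact Subtype.ext ((sq _).trans (hsq y hy))

namespace RAAG

section UniversalProperty

variable {V : Type} {Γ : SimpleGraph V} {G : Type*} [Group G]

variable (Γ) in
/-- The generator of the right-angled Artin group corresponding to a vertex. -/
def gen (v : V) : RAAG Γ := PresentedGroup.of v

theorem commute_gen {s t : V} (h : Γ.Adj s t) : Commute (gen Γ s) (gen Γ t) := by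
  have hst : PresentedGroup.mk (raagRels Γ) (FreeGroup.of s * FreeGroup.of t *
      (FreeGroup.of s)⁻¹ * (FreeGroup.of t)⁻¹) = 1 :=
    PresentedGroup.one_of_mem ⟨s, t, h, rfl⟩
  exact commutatorElement_eq_one_iff_commute.1 hst

/-- The homomorphism extending a map on the vertices sending adjacent vertices to commuting
elements. -/
def lift (f : V → G) (hf : ∀ s t, Γ.Adj s t → Commute (f s) (f t)) : RAAG Γ →* G :=
  PresentedGroup.toGroup (f := f) (by
    rintro _ ⟨s, t, hst, rfl⟩
    simp [(hf s t hst).eq])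

@[simp]
theorem lift_gen (f : V → G) (hf : ∀ s t, Γ.Adj s t → Commute (f s) (f t)) (v : V) :
    lift f hf (gen Γ v) = f v :=
  PresentedGroup.toGroup.of _

theorem hom_ext {f g : RAAG Γ →* G} (h : ∀ v, f (gen Γ v) = g (gen Γ v)) : f = g :=
  PresentedGroup.ext h

theorem closure_range_gen : Subgroup.closure (Set.range (gen Γ)) = ⊤ :=
  PresentedGroup.closure_range_of _

instance [Finite V] : Group.FG (RAAG Γ) :=
  Group.fg_iff.2 ⟨_, closure_range_gen, Set.finite_range _⟩

end UniversalProperty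

section CoxeterEmbedding

open scoped Classical in
/-- The Coxeter matrix of Davis and Januszkiewicz: the simple reflections `(v, true)` and
`(w, true)` commute for adjacent vertices, and `(v, false)` commutes with `(w, true)` and
`(w, false)` for all `w ≠ v`. -/
noncomputable def doubleMatrix {V : Type} (Γ : SimpleGraph V) : CoxeterMatrix (V × Bool) where
  M := .of fun a b ↦
    if a = b then 1 else if a.1 ≠ b.1 ∧ (a.2 → b.2 → Γ.Adj a.1 b.1) then 2 else 0
  isSymm := .ext fun a b ↦ by
    simp only [Matrix.of_apply, eq_comm (a := b), ne_comm (a := b.1), Γ.adj_comm b.1,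
      forall_comm (α := b.2 = true)]
  diagonal a := if_pos rfl
  off_diagonal a b h := by
    simp only [Matrix.of_apply]
    split_ifs <;> simp_all

variable {V : Type} {Γ : SimpleGraph V}

open scoped Classical in
theorem doubleMatrix_eq_two_iff {a b : V × Bool} :
    doubleMatrix Γ a b = 2 ↔ a.1 ≠ b.1 ∧ (a.2 → b.2 → Γ.Adj a.1 b.1) := by
  change (if a = b then 1 else if a.1 ≠ b.1 ∧ (a.2 → b.2 → Γ.Adj a.1 b.1) then 2 else 0) = 2 ↔ _
  split_ifs <;> simp_all

variable (Γ) in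
theorem isRightAngled_doubleMatrix : IsRightAngled (doubleMatrix Γ) := by
  intro a b hab
  refine or_iff_not_imp_left.2 fun h ↦ ?_
  rw [doubleMatrix_eq_two_iff] at h
  exact (if_neg hab).trans (if_neg h)

open scoped Classical in
variable (Γ) in
/-- The endomorphism inverting the generator `v` and fixing the other ones. -/
noncomputable def flip (v : V) : RAAG Γ →* RAAG Γ :=
  lift (Function.update (gen Γ) v (gen Γ v)⁻¹) fun s t hst ↦ by
    by_cases hs : s = v <;> by_cases ht : t = v <;>
      simp_all [Function.update_of_ne, commute_gen]

@[simp]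
theorem flip_gen_self (v : V) : flip Γ v (gen Γ v) = (gen Γ v)⁻¹ := by simp [flip]

theorem flip_gen_of_ne {u v : V} (h : u ≠ v) : flip Γ v (gen Γ u) = gen Γ u := by simp [flip, h]

theorem flip_flip (v : V) (x : RAAG Γ) : flip Γ v (flip Γ v x) = x := by
  suffices (flip Γ v).comp (flip Γ v) = .id _ from DFunLike.congr_fun this x
  refine hom_ext fun u ↦ ?_
  obtain rfl | huv := eq_or_ne u v
  · simp
  · simp [flip_gen_of_ne huv]

theorem flip_comm (u v : V) (x : RAAG Γ) : flip Γ v (flip Γ u x) = flip Γ u (flip Γ v x) := by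
  suffices (flip Γ v).comp (flip Γ u) = (flip Γ u).comp (flip Γ v) from DFunLike.congr_fun this x
  refine hom_ext fun w ↦ ?_
  by_cases hu : w = u <;> by_cases hv : w = v <;>
    simp_all [flip_gen_of_ne]

variable (Γ) in
/-- The action of the simple reflections of the Coxeter group of `doubleMatrix Γ` on the
right-angled Artin group. -/
noncomputable def reflection (a : V × Bool) : Equiv.Perm (RAAG Γ) :=
  Function.Involutive.toPerm (fun x ↦ (bif a.2 then gen Γ a.1 else 1) * flip Γ a.1 x) fun x ↦ by
    obtain ⟨v, _ | _⟩ := a <;> simp [flip_flip]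

theorem commute_reflection {a b : V × Bool} (h : doubleMatrix Γ a b = 2) :
    Commute (reflection Γ a) (reflection Γ b) := by
  obtain ⟨hne, hadj⟩ := doubleMatrix_eq_two_iff.1 h
  obtain ⟨v, i⟩ := a
  obtain ⟨w, j⟩ := b
  have hgen (hi : i = true) (hj : j = true) (x : RAAG Γ) :
      gen Γ v * (gen Γ w * x) = gen Γ w * (gen Γ v * x) :=
    (commute_gen (hadj hi hj)).left_comm x
  refine Equiv.ext fun x ↦ ?_
  cases i <;> cases j <;> simp_all [reflection, flip_gen_of_ne, flip_comm v w, ne_comm]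

variable {W : Type*} [Group W] (cs : CoxeterSystem (doubleMatrix Γ) W)

/-- The homomorphism to the Coxeter group of `doubleMatrix Γ` sending the generator `v` to the
product of the simple reflections `(v, true)` and `(v, false)`. -/
noncomputable def toCoxeterGroup : RAAG Γ →* W :=
  lift (fun v ↦ cs.simple (v, true) * cs.simple (v, false)) fun s t hst ↦ by
    have hcomm (i j : Bool) : Commute (cs.simple (s, i)) (cs.simple (t, j)) :=
      commute_simple cs (doubleMatrix_eq_two_iff.2 ⟨hst.ne, fun _ _ ↦ hst⟩)
    exact ((hcomm _ _).mul_right (hcomm _ _)).mul_left ((hcomm _ _).mul_right (hcomm _ _))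

theorem toCoxeterGroup_gen (v : V) :
    toCoxeterGroup cs (gen Γ v) = cs.simple (v, true) * cs.simple (v, false) :=
  lift_gen ..

theorem toCoxeterGroup_injective : Function.Injective (toCoxeterGroup cs) := by
  have hlift : (doubleMatrix Γ).IsLiftable (reflection Γ) :=
    (isRightAngled_doubleMatrix Γ).isLiftable
      (fun a ↦ Equiv.ext fun x ↦ (reflection Γ a).left_inv x) fun _ _ ↦ commute_reflection
  have hcomp : (cs.lift ⟨reflection Γ, hlift⟩).comp (toCoxeterGroup cs) =
      MulAction.toPermHom (RAAG Γ) (RAAG Γ) := by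
    refine hom_ext fun v ↦ Equiv.ext fun x ↦ ?_
    rw [MonoidHom.comp_apply, toCoxeterGroup_gen, map_mul, cs.lift_apply_simple hlift,
      cs.lift_apply_simple hlift]
    simp [reflection, flip_flip]
  refine .of_comp (f := cs.lift ⟨reflection Γ, hlift⟩) ?_
  rw [← MonoidHom.coe_comp, hcomp]
  exact MulAction.toPerm_injective

theorem simple_false_mul_toCoxeterGroup_mul_simple_false (v : V) (g : RAAG Γ) :
    cs.simple (v, false) * toCoxeterGroup cs g * cs.simple (v, false) =
      toCoxeterGroup cs (flip Γ v g) := by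
  suffices (MulAut.conj (cs.simple (v, false))).toMonoidHom.comp (toCoxeterGroup cs) =
      (toCoxeterGroup cs).comp (flip Γ v) by
    simpa using DFunLike.congr_fun this g
  refine hom_ext fun u ↦ ?_
  obtain rfl | huv := eq_or_ne u v
  · simp [toCoxeterGroup_gen, mul_assoc]
  · have hcomm (i : Bool) : Commute (cs.simple (v, false)) (cs.simple (u, i)) :=
      commute_simple cs (doubleMatrix_eq_two_iff.2 ⟨huv.symm, fun h ↦ by simp at h⟩)
    simpa [toCoxeterGroup_gen, flip_gen_of_ne huv] using
      ((hcomm true).mul_right (hcomm false)).mul_inv_cancel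

theorem normal_range_toCoxeterGroup : (toCoxeterGroup cs).range.Normal := by
  have hsimple (a : V × Bool) (g : RAAG Γ) :
      cs.simple a * toCoxeterGroup cs g * cs.simple a ∈ (toCoxeterGroup cs).range := by
    obtain ⟨v, i⟩ := a
    have hfalse := simple_false_mul_toCoxeterGroup_mul_simple_false cs v g
    cases i with
    | false => exact ⟨flip Γ v g, hfalse.symm⟩
    | true =>
      refine ⟨gen Γ v * flip Γ v g * (gen Γ v)⁻¹, ?_⟩
      simp [toCoxeterGroup_gen, ← hfalse, mul_assoc]
  refine ⟨fun n hn w ↦ ?_⟩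
  induction w using cs.simple_induction_left with
  | one => simpa
  | mul_simple_left w a ih =>
    obtain ⟨g, hg⟩ := ih
    simpa [hg, mul_assoc] using hsimple a g

theorem finiteIndex_range_toCoxeterGroup [Finite V] : (toCoxeterGroup cs).range.FiniteIndex := by
  have := normal_range_toCoxeterGroup cs
  have hcomm (a b : V) : Commute (cs.simple (a, false)) (cs.simple (b, false)) := by
    obtain rfl | hab := eq_or_ne a b
    exacts [.refl _, commute_simple cs (doubleMatrix_eq_two_iff.2 ⟨hab, fun h ↦ by simp at h⟩)]
  have hlift : (doubleMatrix Γ).IsLiftable fun a : V × Bool ↦ cs.simple (a.1, false) :=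
    (isRightAngled_doubleMatrix Γ).isLiftable (fun a ↦ cs.simple_mul_simple_self _)
      fun _ _ _ ↦ hcomm _ _
  let σ : W →* W := cs.lift ⟨_, hlift⟩
  have hσ (a : V × Bool) : σ (cs.simple a) = cs.simple (a.1, false) := cs.lift_apply_simple hlift a
  have : Finite σ.range := by
    rw [MonoidHom.range_eq_map, ← cs.subgroup_closure_range_simple, MonoidHom.map_closure,
      ← Set.range_comp]
    refine finite_closure_of_commute_of_mul_self_eq_one (Set.finite_range _) ?_ ?_ <;>
      simp [hσ, (hcomm _ _).eq]
  have hker : σ.ker ≤ (toCoxeterGroup cs).range := by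
    let π := QuotientGroup.mk' (toCoxeterGroup cs).range
    have hπ : π = π.comp σ := cs.ext_simple fun ⟨v, i⟩ ↦ by
      cases i with
      | false => simp [hσ]
      | true =>
        rw [MonoidHom.comp_apply, hσ]
        exact QuotientGroup.eq.2 ⟨gen Γ v, by rw [toCoxeterGroup_gen, cs.inv_simple]⟩
    intro w hw
    rw [← QuotientGroup.ker_mk' (toCoxeterGroup cs).range, MonoidHom.mem_ker]
    exact (DFunLike.congr_fun hπ w).trans ((congrArg π hw).trans (map_one π))
  exact Subgroup.finiteIndex_of_le hker

variable (Γ) in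
theorem liftsConjugators [Finite V] : LiftsConjugators (RAAG Γ) := by
  let cs := (doubleMatrix Γ).toCoxeterSystem
  have := finiteIndex_range_toCoxeterGroup cs
  exact ((isRightAngled_doubleMatrix Γ).liftsConjugators cs).of_injective
    (toCoxeterGroup_injective cs)

end CoxeterEmbedding

end RAAG

/-! ### The splitting over the link of a vertex -/

section FreeGroup

open FreeGroup

variable {α : Type*}

variable (α) in
/-- Permutations of a basis act on the free group. -/
def freeGroupPermHom : Equiv.Perm α →* MulAut (FreeGroup α) where
  toFun := freeGroupCongr
  map_one' := freeGroupCongr_refl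
  map_mul' e f := (freeGroupCongr_trans f e).symm

@[simp]
theorem freeGroupPermHom_of (e : Equiv.Perm α) (x : α) :
    freeGroupPermHom α e (of x) = of (e x) :=
  FreeGroup.map.of

theorem eq_of_isConj_freeGroup_of {x y : α} (h : IsConj (of x) (of y)) : x = y :=
  FreeAbelianGroup.of_injective
    (isConj_iff_eq.1 (Abelianization.of.map_isConj h) : Abelianization.of (of x) = _)

theorem exists_isCyclicallyReduced_mk_mem {R : Subgroup (FreeGroup α)} [hnormal : R.Normal]
    (hR : R ≠ ⊥) : ∃ L ≠ [], IsCyclicallyReduced L ∧ mk L ∈ R := by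
  classical
  obtain ⟨r, hr, hr1⟩ := R.bot_or_exists_ne_one.resolve_left hR
  set c : FreeGroup α := mk (reduceCyclically.conjugator r.toWord)
  have hconj : c * mk (reduceCyclically r.toWord) * c⁻¹ = r := by
    rw [inv_mk, mul_mk, mul_mk, reduceCyclically.conj_conjugator_reduceCyclically, mk_toWord]
  refine ⟨reduceCyclically r.toWord, fun hnil ↦ hr1 ?_,
    reduceCyclically.isCyclicallyReduced isReduced_toWord, ?_⟩
  · rw [← hconj, hnil, ← one_eq_mk, mul_one, mul_inv_cancel]
  · simpa [← eq_inv_mul_iff_mul_eq.2 (eq_mul_of_mul_inv_eq hconj), mul_assoc] using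
      hnormal.conj_mem r hr c⁻¹

variable [DecidableEq α]

theorem eq_of_mem_startsWith {g : FreeGroup α} {w w' : α × Bool} (h : g ∈ startsWith w)
    (h' : g ∈ startsWith w') : w = w' :=
  Option.some_injective _ (h.symm.trans h')

theorem mk_singleton_mem_startsWith_iff {w w' : α × Bool} : mk [w] ∈ startsWith w' ↔ w = w' := by
  simp [startsWith]

theorem mul_mk_singleton_mem_startsWith {g : FreeGroup α} {w a : α × Bool} (hg : g ∈ startsWith w)
    (hne : g * mk [a] ≠ 1) : g * mk [a] ∈ startsWith w := by
  induction hL : g.toWord generalizing g w with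
  | nil => simp [startsWith, hL] at hg
  | cons b K ih =>
    obtain rfl : b = w := by simpa [startsWith, hL] using hg
    have hred : IsReduced (b :: K) := hL ▸ isReduced_toWord
    have hK : (mk K).toWord = K := IsReduced.reduce_eq hred.tail
    obtain rfl : g = mk [b] * mk K := by rw [mul_mk, ← mk_toWord (x := g), hL]; rfl
    rw [mul_assoc] at hne ⊢
    refine startsWith_mk_mul _ fun hmem ↦ ?_
    cases K with
    | nil =>
      have hab : a = (b.1, !b.2) := by
        simpa [← one_eq_mk, mk_singleton_mem_startsWith_iff] using hmem
      exact hne (by rw [← one_eq_mk, one_mul, hab]; exact mul_inv_cancel (mk [b]))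
    | cons c K =>
      have hc := ih (g := mk (c :: K)) (w := c) (by simp [startsWith, hK])
        (startsWith.ne_one _ hmem) hK
      have := (isReduced_cons_cons.1 hred).1
      simp [eq_of_mem_startsWith hc hmem] at this

theorem mul_mem_startsWith_of_norm_lt {g f : FreeGroup α} {w : α × Bool} (hg : g ∈ startsWith w)
    (hlt : f.norm < g.norm) : g * f ∈ startsWith w := by
  obtain ⟨L, hL, rfl⟩ : ∃ L : List (α × Bool), L.length < g.norm ∧ f = mk L :=
    ⟨f.toWord, hlt, mk_toWord.symm⟩
  clear hlt
  induction L generalizing g with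
  | nil => simpa [← one_eq_mk] using hg
  | cons a L ih =>
    have hnorm : g.norm ≤ (g * mk [a]).norm + 1 := by
      calc g.norm = (g * mk [a] * (mk [a])⁻¹).norm := by rw [mul_inv_cancel_right]
        _ ≤ (g * mk [a]).norm + (mk [a])⁻¹.norm := norm_mul_le _ _
        _ = (g * mk [a]).norm + 1 := by rw [norm_inv_eq]; rfl
    rw [List.length_cons] at hL
    have hne : g * mk [a] ≠ 1 := fun h ↦ by simp [h] at hnorm; omega
    rw [← List.singleton_append, ← mul_mk, ← mul_assoc]
    exact ih (mul_mk_singleton_mem_startsWith hg hne) (by omega)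

theorem eq_one_and_eq_of_not_mem_startsWith_iff_mul_of_mem {g : FreeGroup α} {x y : α}
    (h : ¬(g ∈ startsWith (x, true) ↔ g * of y ∈ startsWith (x, true))) : g = 1 ∧ x = y := by
  by_cases hg : g ∈ startsWith (x, true)
  · have hone : g * of y = 1 := by
      by_contra hne
      exact h (iff_of_true hg (mul_mk_singleton_mem_startsWith hg hne))
    rw [eq_inv_of_mul_eq_one_left hone] at hg
    simpa using mk_singleton_mem_startsWith_iff.1 hg
  · have hgy : g * of y ∈ startsWith (x, true) := by tauto
    have hcancel : g * of y * mk [(y, false)] = g := mul_inv_cancel_right g (of y)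
    have hone : g = 1 := by
      by_contra hne
      rw [← hcancel] at hg hne
      exact hg (mul_mk_singleton_mem_startsWith hgy hne)
    rw [hone, one_mul] at hgy
    exact ⟨hone, congrArg Prod.fst (mk_singleton_mem_startsWith_iff.1 hgy).symm⟩

theorem inv_notMem_startsWith_of_isCyclicallyReduced {g : FreeGroup α} {w : α × Bool}
    (hcyc : IsCyclicallyReduced g.toWord) (hg : g ∈ startsWith w) : g⁻¹ ∉ startsWith w := by
  intro hinv
  have hlast : (w.1, !w.2) ∈ g.toWord.getLast? := by
    rw [startsWith, Set.mem_ofPred_eq, toWord_inv, invRev, ← List.head?_eq_getElem?,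
      List.head?_reverse, List.getLast?_map, Option.map_eq_some_iff] at hinv
    obtain ⟨b, hb, rfl⟩ := hinv
    simpa using hb
  rw [startsWith, Set.mem_ofPred_eq, ← List.head?_eq_getElem?] at hg
  simpa using hcyc.2 _ hlast _ hg rfl

theorem exists_mem_le_norm_notMem_startsWith {R : Subgroup (FreeGroup α)} [R.Normal] (hR : R ≠ ⊥)
    (n : ℕ) (w : α × Bool) : ∃ r ∈ R, n ≤ r.norm ∧ r ∉ startsWith w := by
  obtain ⟨L, hne, hcyc, hLR⟩ := exists_isCyclicallyReduced_mk_mem hR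
  have hword : (mk L ^ n).toWord = (List.replicate n L).flatten := by
    rw [pow_mk, toWord_mk, (hcyc.flatten_replicate n).isReduced.reduce_eq]
  have hnorm : n ≤ (mk L ^ n).norm := by
    rw [FreeGroup.norm, hword]
    simpa using Nat.le_mul_of_pos_right n (List.length_pos_of_ne_nil hne)
  by_cases h : mk L ^ n ∈ startsWith w
  · exact ⟨_, inv_mem (pow_mem hLR n), hnorm.trans_eq norm_inv_eq.symm,
      inv_notMem_startsWith_of_isCyclicallyReduced (hword ▸ hcyc.flatten_replicate n) h⟩
  · exact ⟨_, pow_mem hLR n, hnorm, h⟩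

theorem exists_mem_mul_mem_startsWith {R : Subgroup (FreeGroup α)} [hnormal : R.Normal]
    (hR : R ≠ ⊥) (f : FreeGroup α) (w : α × Bool) : ∃ r ∈ R, r * f ∈ startsWith w := by
  obtain ⟨r, hr, hlarge, hstart⟩ :=
    exists_mem_le_norm_notMem_startsWith hR (f.norm + 3) (w.1, !w.2)
  refine ⟨mk [w] * r * (mk [w])⁻¹, hnormal.conj_mem r hr _, ?_⟩
  rw [mul_assoc]
  refine mul_mem_startsWith_of_norm_lt (startsWith_mk_mul r hstart) ?_
  have hletter : (mk [w] : FreeGroup α)⁻¹.norm = 1 := norm_inv_eq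
  have hleft : ((mk [w])⁻¹ * f).norm ≤ (mk [w])⁻¹.norm + f.norm := norm_mul_le _ _
  have hright : ((mk [w])⁻¹ * (mk [w] * r)).norm ≤ (mk [w])⁻¹.norm + (mk [w] * r).norm :=
    norm_mul_le _ _
  rw [inv_mul_cancel_left] at hright
  omega

end FreeGroup

namespace RAAG

variable {V : Type} {Γ : SimpleGraph V}

section Kill

open scoped Classical in
variable (Γ) in
/-- The endomorphism killing the generators in `A` and fixing the other ones. -/
noncomputable def kill (A : Set V) : RAAG Γ →* RAAG Γ :=
  lift (fun u ↦ if u ∈ A then 1 else gen Γ u) fun s t hst ↦ by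
    split_ifs <;> simp [commute_gen hst]

theorem kill_gen_of_mem {A : Set V} {u : V} (h : u ∈ A) : kill Γ A (gen Γ u) = 1 := by
  simp [kill, h]

theorem kill_gen_of_notMem {A : Set V} {u : V} (h : u ∉ A) : kill Γ A (gen Γ u) = gen Γ u := by
  simp [kill, h]

theorem kill_kill (A B : Set V) (g : RAAG Γ) : kill Γ A (kill Γ B g) = kill Γ (A ∪ B) g := by
  suffices (kill Γ A).comp (kill Γ B) = kill Γ (A ∪ B) from DFunLike.congr_fun this g
  refine hom_ext fun u ↦ ?_
  by_cases hA : u ∈ A <;> by_cases hB : u ∈ B <;> simp [kill, hA, hB]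

theorem kill_kill_self (A : Set V) (g : RAAG Γ) : kill Γ A (kill Γ A g) = kill Γ A g := by
  rw [kill_kill, Set.union_self]

end Kill

section Link

variable (Γ) in
/-- The subgroup generated by the link of a vertex. -/
def linkSubgroup (v : V) : Subgroup (RAAG Γ) := raagVertexSubgroup Γ (Γ.neighborSet v)

variable {v : V}

theorem gen_mem_linkSubgroup {u : V} (h : Γ.Adj v u) : gen Γ u ∈ linkSubgroup Γ v :=
  Subgroup.subset_closure ⟨u, h, rfl⟩

theorem linkSubgroup_le_centralizer : linkSubgroup Γ v ≤ Subgroup.centralizer {gen Γ v} := by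
  refine (Subgroup.closure_le _).2 ?_
  rintro _ ⟨u, hu, rfl⟩
  exact Subgroup.mem_centralizer_singleton_iff.2 (commute_gen hu).symm.eq

end Link

section Splitting

variable (v : V)

variable (Γ) in
/-- The stabilizer of `gen Γ v` for the action through which `RAAG Γ`, composed with
`kill Γ {v}`, permutes a free basis of the normal closure of `gen Γ v`. -/
noncomputable def basisStabilizer : Subgroup (RAAG Γ) := (linkSubgroup Γ v).comap (kill Γ {v})

variable (Γ) in
/-- A set indexing a free basis of the kernel of `kill Γ {v}`: the class of `g` stands for the
conjugate of `gen Γ v` by `kill Γ {v} g`. -/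
abbrev KillBasis : Type := RAAG Γ ⧸ basisStabilizer Γ v

variable {v} in
theorem killBasis_mk_eq_mk_iff {g h : RAAG Γ} :
    (g : KillBasis Γ v) = h ↔ kill Γ {v} (g⁻¹ * h) ∈ linkSubgroup Γ v :=
  QuotientGroup.eq

theorem mk_kill (g : RAAG Γ) : (kill Γ {v} g : KillBasis Γ v) = g := by
  simp [killBasis_mk_eq_mk_iff, kill_kill_self, one_mem]

variable (Γ) in
/-- The action of `RAAG Γ` on the free group over `KillBasis Γ v` by permutations of the basis. -/
noncomputable def killBasisAction : RAAG Γ →* MulAut (FreeGroup (KillBasis Γ v)) :=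
  (freeGroupPermHom _).comp (MulAction.toPermHom _ _)

@[simp]
theorem killBasisAction_of (g : RAAG Γ) (y : KillBasis Γ v) :
    killBasisAction Γ v g (FreeGroup.of y) = FreeGroup.of (g • y) :=
  freeGroupPermHom_of _ _

theorem killBasisAction_kill (g : RAAG Γ) :
    killBasisAction Γ v (kill Γ {v} g) = killBasisAction Γ v g := by
  suffices MulAction.toPermHom (RAAG Γ) (KillBasis Γ v) (kill Γ {v} g) =
    MulAction.toPermHom _ _ g from congrArg (freeGroupPermHom _) this
  ext y
  obtain ⟨h, rfl⟩ := QuotientGroup.mk_surjective y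
  change ((kill Γ {v} g * h : RAAG Γ) : KillBasis Γ v) = (g * h : RAAG Γ)
  simp [← mk_kill v (_ * h), kill_kill_self]

open scoped Classical in
variable (Γ) in
/-- The homomorphism whose first component is the crossed homomorphism `cocycle Γ v` and whose
second component is the identity. -/
noncomputable def toSemidirectProduct :
    RAAG Γ →* FreeGroup (KillBasis Γ v) ⋊[killBasisAction Γ v] RAAG Γ :=
  lift (fun u ↦ ⟨if u = v then FreeGroup.of ((1 : RAAG Γ) : KillBasis Γ v) else 1, gen Γ u⟩) <| by
    have hfix (t) (ht : Γ.Adj v t) :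
        (gen Γ t • ((1 : RAAG Γ) : KillBasis Γ v)) = (1 : RAAG Γ) := by
      change ((gen Γ t * 1 : RAAG Γ) : KillBasis Γ v) = (1 : RAAG Γ)
      rw [mul_one, eq_comm, killBasis_mk_eq_mk_iff, inv_one, one_mul,
        kill_gen_of_notMem (Set.notMem_singleton_iff.2 ht.ne')]
      exact gen_mem_linkSubgroup ht
    intro s t hst
    refine SemidirectProduct.ext ?_ (commute_gen hst).eq
    by_cases hs : s = v <;> by_cases ht : t = v
    · exact absurd (hs.trans ht.symm) hst.ne
    · subst hs
      simp [ht, hfix t hst]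
    · subst ht
      simp [hs, hfix s hst.symm]
    · simp [hs, ht]

theorem toSemidirectProduct_right (g : RAAG Γ) : (toSemidirectProduct Γ v g).right = g := by
  suffices SemidirectProduct.rightHom.comp (toSemidirectProduct Γ v) = .id _ from
    DFunLike.congr_fun this g
  exact hom_ext fun u ↦ by simp [toSemidirectProduct]

variable (Γ) in
/-- The crossed homomorphism recording the occurrences of `v` in a word, each of them with its
prefix. -/
noncomputable def cocycle (g : RAAG Γ) : FreeGroup (KillBasis Γ v) :=
  (toSemidirectProduct Γ v g).left

theorem cocycle_mul (g h : RAAG Γ) :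
    cocycle Γ v (g * h) = cocycle Γ v g * killBasisAction Γ v g (cocycle Γ v h) := by
  simp [cocycle, toSemidirectProduct_right]

theorem cocycle_gen_self : cocycle Γ v (gen Γ v) = FreeGroup.of ((1 : RAAG Γ) : KillBasis Γ v) := by
  simp [cocycle, toSemidirectProduct]

theorem cocycle_gen_of_ne {u : V} (h : u ≠ v) : cocycle Γ v (gen Γ u) = 1 := by
  simp [cocycle, toSemidirectProduct, h]

theorem cocycle_mul_gen_self (g : RAAG Γ) :
    cocycle Γ v (g * gen Γ v) = cocycle Γ v g * FreeGroup.of (g : KillBasis Γ v) := by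
  rw [cocycle_mul, cocycle_gen_self, killBasisAction_of, MulAction.Quotient.smul_coe, smul_eq_mul,
    mul_one]

theorem cocycle_kill (g : RAAG Γ) : cocycle Γ v (kill Γ {v} g) = 1 := by
  suffices (toSemidirectProduct Γ v).comp (kill Γ {v}) = SemidirectProduct.inr.comp (kill Γ {v})
    from congrArg SemidirectProduct.left (DFunLike.congr_fun this g)
  refine hom_ext fun u ↦ ?_
  by_cases h : u = v
  · simp [kill, h]
  · simp [kill, toSemidirectProduct, h]

variable (Γ) in
/-- The homomorphism sending the class of `g` to the conjugate of `gen Γ v` by `kill Γ {v} g`;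
it is inverse to `cocycle Γ v` on the kernel of `kill Γ {v}`. -/
noncomputable def ofKillBasis : FreeGroup (KillBasis Γ v) →* RAAG Γ :=
  FreeGroup.lift <| Quotient.lift (fun g ↦ kill Γ {v} g * gen Γ v * (kill Γ {v} g)⁻¹) <| by
    intro g h hgh
    have hlink : kill Γ {v} (g⁻¹ * h) ∈ linkSubgroup Γ v := QuotientGroup.leftRel_apply.1 hgh
    have hcomm := Subgroup.mem_centralizer_singleton_iff.1 (linkSubgroup_le_centralizer hlink)
    obtain ⟨k, rfl⟩ : ∃ k, h = g * k := ⟨g⁻¹ * h, (mul_inv_cancel_left _ _).symm⟩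
    rw [inv_mul_cancel_left] at hcomm
    simp only [map_mul, mul_inv_rev, mul_assoc, mul_right_inj]
    rw [← mul_assoc (kill Γ {v} k), hcomm, mul_assoc, mul_inv_cancel_left]

theorem ofKillBasis_of (g : RAAG Γ) : ofKillBasis Γ v (FreeGroup.of (g : KillBasis Γ v)) =
    kill Γ {v} g * gen Γ v * (kill Γ {v} g)⁻¹ :=
  FreeGroup.lift_apply_of

theorem kill_ofKillBasis (f : FreeGroup (KillBasis Γ v)) : kill Γ {v} (ofKillBasis Γ v f) = 1 := by
  suffices (kill Γ {v}).comp (ofKillBasis Γ v) = 1 from DFunLike.congr_fun this f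
  refine FreeGroup.ext_hom _ _ fun y ↦ ?_
  obtain ⟨g, rfl⟩ := QuotientGroup.mk_surjective y
  simp [ofKillBasis_of, kill_gen_of_mem]

theorem ofKillBasis_killBasisAction (g : RAAG Γ) (f : FreeGroup (KillBasis Γ v)) :
    ofKillBasis Γ v (killBasisAction Γ v g f) =
      kill Γ {v} g * ofKillBasis Γ v f * (kill Γ {v} g)⁻¹ := by
  suffices (ofKillBasis Γ v).comp (killBasisAction Γ v g).toMonoidHom =
      (MulAut.conj (kill Γ {v} g)).toMonoidHom.comp (ofKillBasis Γ v) from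
    DFunLike.congr_fun this f
  refine FreeGroup.ext_hom _ _ fun y ↦ ?_
  obtain ⟨h, rfl⟩ := QuotientGroup.mk_surjective y
  simp [ofKillBasis_of, mul_assoc]

theorem ofKillBasis_cocycle_mul_kill (g : RAAG Γ) :
    ofKillBasis Γ v (cocycle Γ v g) * kill Γ {v} g = g := by
  suffices MonoidHom.mk' (fun g ↦ ofKillBasis Γ v (cocycle Γ v g) * kill Γ {v} g)
      (fun g h ↦ by simp [cocycle_mul, ofKillBasis_killBasisAction, mul_assoc]) = .id _ from
    DFunLike.congr_fun this g
  refine hom_ext fun u ↦ ?_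
  by_cases h : u = v
  · subst h
    simp [cocycle_gen_self, ofKillBasis_of, kill_gen_of_mem]
  · simp [cocycle_gen_of_ne, kill_gen_of_notMem, h]

theorem killBasisAction_ofKillBasis (f : FreeGroup (KillBasis Γ v)) :
    killBasisAction Γ v (ofKillBasis Γ v f) = 1 := by
  rw [← killBasisAction_kill, kill_ofKillBasis, map_one]

theorem cocycle_ofKillBasis (f : FreeGroup (KillBasis Γ v)) :
    cocycle Γ v (ofKillBasis Γ v f) = f := by
  suffices MonoidHom.mk' (fun f ↦ cocycle Γ v (ofKillBasis Γ v f))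
      (fun f f' ↦ by simp [cocycle_mul, killBasisAction_ofKillBasis]) = .id _ from
    DFunLike.congr_fun this f
  refine FreeGroup.ext_hom _ _ fun y ↦ ?_
  obtain ⟨g, rfl⟩ := QuotientGroup.mk_surjective y
  change cocycle Γ v (ofKillBasis Γ v (FreeGroup.of (g : KillBasis Γ v))) = FreeGroup.of _
  rw [ofKillBasis_of, ← map_inv, cocycle_mul, cocycle_kill, map_one, mul_one,
    cocycle_mul_gen_self, cocycle_kill, one_mul, mk_kill]

theorem cocycle_ofKillBasis_mul (f : FreeGroup (KillBasis Γ v)) (g : RAAG Γ) :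
    cocycle Γ v (ofKillBasis Γ v f * g) = f * cocycle Γ v g := by
  rw [cocycle_mul, cocycle_ofKillBasis, killBasisAction_ofKillBasis, MulAut.one_apply]

theorem cocycle_eq_one_iff {g : RAAG Γ} : cocycle Γ v g = 1 ↔ kill Γ {v} g = g := by
  refine ⟨fun h ↦ ?_, fun h ↦ h ▸ cocycle_kill v g⟩
  simpa [h] using ofKillBasis_cocycle_mul_kill v g

end Splitting

end RAAG

section AlmostInvariant

open scoped Pointwise

variable {G : Type*} [Group G]

/-- A set `A` of group elements is almost invariant relative to a subgroup `H` if, for every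
`p`, the elements which right multiplication by `p` moves across the boundary of `A` are contained
in finitely many translates of `H`. -/
def AlmostInvariant (H : Subgroup G) (A : Set G) : Prop :=
  ∀ p : G, ∃ U : Set G, U.Finite ∧ ∀ g, ¬(g ∈ A ↔ g * p ∈ A) → g ∈ (H : Set G) * U

theorem almostInvariant_of_closure_eq_top {H : Subgroup G} {A S : Set G}
    (hS : Subgroup.closure S = ⊤)
    (h : ∀ s ∈ S, ∃ U : Set G, U.Finite ∧ ∀ g, ¬(g ∈ A ↔ g * s ∈ A) → g ∈ (H : Set G) * U) :
    AlmostInvariant H A := by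
  intro p
  induction hS ▸ Subgroup.mem_top p using Subgroup.closure_induction with
  | mem s hs => exact h s hs
  | one => exact ⟨∅, Set.finite_empty, fun g hg ↦ absurd (by rw [mul_one]) hg⟩
  | mul p q _ _ hp hq =>
    obtain ⟨U, hU, hUp⟩ := hp
    obtain ⟨W, hW, hWq⟩ := hq
    refine ⟨U ∪ W * {p⁻¹}, hU.union (hW.mul (Set.finite_singleton _)), fun g hg ↦ ?_⟩
    rw [← mul_assoc] at hg
    by_cases hgp : g ∈ A ↔ g * p ∈ A
    · refine Set.mul_subset_mul_left Set.subset_union_right ?_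
      rw [← mul_assoc, ← mul_inv_cancel_right g p]
      exact Set.mul_mem_mul (hWq _ fun h ↦ hg (hgp.trans h)) rfl
    · exact Set.mul_subset_mul_left Set.subset_union_left (hUp g hgp)
  | inv p _ hp =>
    obtain ⟨U, hU, hUp⟩ := hp
    refine ⟨U * {p}, hU.mul (Set.finite_singleton _), fun g hg ↦ ?_⟩
    rw [← mul_assoc, ← inv_mul_cancel_right g p]
    exact Set.mul_mem_mul (hUp (g * p⁻¹) (by rwa [inv_mul_cancel_right, iff_comm])) rfl

/-- If every `N`-coset meets both `A` and its complement, then a path in the Cayley graph of `N`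
crosses the boundary of `A` near every point. -/
theorem AlmostInvariant.finiteIndex_sup {H N : Subgroup G} [hN : N.Normal] {A : Set G}
    (hA : AlmostInvariant H A) (hfg : N.FG) (hmem : ∀ g, ∃ n ∈ N, n * g ∈ A)
    (hnotMem : ∀ g, ∃ n ∈ N, n * g ∉ A) : (N ⊔ H).FiniteIndex := by
  obtain ⟨X, rfl, hX⟩ := (Subgroup.fg_iff _).1 hfg
  choose U hU hcross using hA
  have hclose (g : G) : ∃ n ∈ Subgroup.closure X, g * n ∈ (H : Set G) * ⋃ x ∈ X, U x := by
    by_contra! hfar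
    have hstable (n) (hn : n ∈ Subgroup.closure X) : g ∈ A ↔ g * n ∈ A := by
      have hstep (a) (ha : a ∈ Subgroup.closure X) (x) (hx : x ∈ X) :
          g * a ∈ A ↔ g * (a * x) ∈ A := by
        by_contra h
        rw [← mul_assoc] at h
        exact hfar a ha
          (Set.mul_subset_mul_left (Set.subset_biUnion_of_mem hx) (hcross x _ h))
      induction hn using Subgroup.closure_induction_right with
      | one => rw [mul_one]
      | mul_right a ha x hx ih => exact ih.trans (hstep a ha x hx)
      | mul_inv_cancel a ha x hx ih =>
        have := hstep (a * x⁻¹) (mul_mem ha (inv_mem (Subgroup.subset_closure hx))) x hx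
        rw [inv_mul_cancel_right] at this
        exact ih.trans this.symm
    have hleft (n) (hn : n ∈ Subgroup.closure X) : g ∈ A ↔ n * g ∈ A := by
      simpa [mul_assoc] using hstable _ (hN.conj_mem n hn g⁻¹)
    obtain ⟨n, hn, hn'⟩ := hmem g
    obtain ⟨m, hm, hm'⟩ := hnotMem g
    exact hm' ((hleft m hm).1 ((hleft n hn).2 hn'))
  refine finiteIndex_iff_exists_finite_mul_eq_univ.2
    ⟨(⋃ x ∈ X, U x)⁻¹, (hX.biUnion fun x _ ↦ hU x).inv, Set.eq_univ_of_forall fun g ↦ ?_⟩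
  obtain ⟨n, hn, h, hh, u, hu, hgn : h * u = g⁻¹ * n⟩ := hclose g⁻¹
  have hg : g = u⁻¹ * (u * n * u⁻¹ * h⁻¹) := by
    rw [eq_mul_of_inv_mul_eq hgn.symm]
    group
  rw [hg]
  exact Set.mul_mem_mul (Set.inv_mem_inv.2 hu)
    (Subgroup.mul_mem_sup (hN.conj_mem n hn u) (inv_mem hh))

end AlmostInvariant

namespace RAAG

variable {V : Type} {Γ : SimpleGraph V}

section HalfSpace

variable {v : V}

open scoped Classical in
variable (Γ v) in
/-- The half-space of the splitting over the link of `v` that lies beyond the edge labelled by the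
trivial coset: the elements whose cocycle starts with the corresponding positive letter. -/
noncomputable def halfSpace : Set (RAAG Γ) :=
  cocycle Γ v ⁻¹' FreeGroup.startsWith ((1 : RAAG Γ), true)

theorem mem_linkSubgroup_of_cocycle_eq_one {g : RAAG Γ} (hg : cocycle Γ v g = 1)
    (hmk : ((1 : RAAG Γ) : KillBasis Γ v) = g) : g ∈ linkSubgroup Γ v := by
  rwa [killBasis_mk_eq_mk_iff, inv_one, one_mul, (cocycle_eq_one_iff v).1 hg] at hmk

theorem almostInvariant_halfSpace : AlmostInvariant (linkSubgroup Γ v) (halfSpace Γ v) := by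
  classical
  refine almostInvariant_of_closure_eq_top closure_range_gen ?_
  rintro _ ⟨u, rfl⟩
  refine ⟨{1}, Set.finite_singleton 1, fun g hg ↦ ?_⟩
  suffices g ∈ linkSubgroup Γ v from ⟨g, this, 1, rfl, mul_one g⟩
  by_cases huv : u = v
  · subst huv
    simp only [halfSpace, Set.mem_preimage, cocycle_mul_gen_self] at hg
    obtain ⟨hone, hmk⟩ := eq_one_and_eq_of_not_mem_startsWith_iff_mul_of_mem hg
    exact mem_linkSubgroup_of_cocycle_eq_one hone hmk
  · refine absurd ?_ hg
    simp only [halfSpace, Set.mem_preimage, cocycle_mul, cocycle_gen_of_ne v huv, map_one, mul_one]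

variable (v) in
/-- The elements of the free group over `KillBasis Γ v` whose left translations are induced by left
translations of `RAAG Γ` by elements of `N`. -/
def leftTranslations (N : Subgroup (RAAG Γ)) : Subgroup (FreeGroup (KillBasis Γ v)) where
  carrier := {r | ∃ t ∈ N, ∀ g, cocycle Γ v (t * g) = r * cocycle Γ v g}
  one_mem' := ⟨1, N.one_mem, by simp⟩
  mul_mem' := by
    rintro r s ⟨t, ht, hr⟩ ⟨u, hu, hs⟩
    exact ⟨t * u, N.mul_mem ht hu, fun g ↦ by rw [mul_assoc, hr, hs, mul_assoc]⟩
  inv_mem' := by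
    rintro r ⟨t, ht, hr⟩
    exact ⟨t⁻¹, N.inv_mem ht, fun g ↦ by rw [eq_inv_mul_iff_mul_eq, ← hr, mul_inv_cancel_left]⟩

instance (N : Subgroup (RAAG Γ)) [hN : N.Normal] : (leftTranslations v N).Normal where
  conj_mem := by
    rintro r ⟨t, ht, hr⟩ f
    refine ⟨_, hN.conj_mem t ht (ofKillBasis Γ v f), fun g ↦ ?_⟩
    rw [mul_assoc, mul_assoc, cocycle_ofKillBasis_mul, hr, ← map_inv, cocycle_ofKillBasis_mul,
      mul_assoc, mul_assoc]

variable {N : Subgroup (RAAG Γ)}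

theorem cocycle_mem_leftTranslations {t : RAAG Γ} (ht : t ∈ N)
    (hact : killBasisAction Γ v t = 1) : cocycle Γ v t ∈ leftTranslations v N :=
  ⟨t, ht, fun g ↦ by rw [cocycle_mul, hact, MulAut.one_apply]⟩

theorem killBasisAction_eq_one_of_commute {m : RAAG Γ}
    (hm : ∀ f, Commute m (ofKillBasis Γ v f)) : killBasisAction Γ v m = 1 := by
  have hconj (f) : cocycle Γ v m * killBasisAction Γ v m f = f * cocycle Γ v m := by
    have := congrArg (cocycle Γ v) (hm f).eq
    rwa [cocycle_mul, cocycle_ofKillBasis, cocycle_ofKillBasis_mul] at this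
  have hperm (y : KillBasis Γ v) : m • y = y := by
    refine eq_of_isConj_freeGroup_of (isConj_iff.2 ⟨cocycle Γ v m, ?_⟩)
    rw [← killBasisAction_of, hconj, mul_inv_cancel_right]
  suffices (killBasisAction Γ v m).toMonoidHom = .id _ from
    MulEquiv.ext fun f ↦ DFunLike.congr_fun this f
  exact FreeGroup.ext_hom _ _ fun y ↦ by simp [hperm]

variable [hN : N.Normal]

theorem leftTranslations_ne_bot {m : RAAG Γ} (hm : m ∈ N) (hmv : kill Γ {v} m ≠ m) :
    leftTranslations v N ≠ ⊥ := by
  rw [Subgroup.ne_bot_iff_exists_ne_one]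
  suffices ∃ t ∈ N, kill Γ {v} t ≠ t ∧ killBasisAction Γ v t = 1 by
    obtain ⟨t, ht, htv, hact⟩ := this
    exact ⟨⟨_, cocycle_mem_leftTranslations ht hact⟩,
      fun h ↦ htv ((cocycle_eq_one_iff v).1 (congrArg Subtype.val h))⟩
  by_cases hker : ∃ t ∈ N, t ≠ 1 ∧ kill Γ {v} t = 1
  · obtain ⟨t, ht, ht1, htv⟩ := hker
    exact ⟨t, ht, fun h ↦ ht1 (h.symm.trans htv),
      by rw [← killBasisAction_kill, htv, map_one]⟩
  · push Not at hker
    refine ⟨m, hm, hmv, killBasisAction_eq_one_of_commute fun f ↦ ?_⟩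
    rw [← commutatorElement_eq_one_iff_commute]
    by_contra hne
    refine hker _ ?_ hne (by simp [commutatorElement_def, kill_ofKillBasis])
    rw [commutatorElement_def, mul_assoc, mul_assoc, ← mul_assoc (ofKillBasis Γ v f)]
    exact mul_mem hm (hN.conj_mem _ (inv_mem hm) _)

theorem finiteIndex_sup_linkSubgroup (hfg : N.FG) {m : RAAG Γ} (hm : m ∈ N)
    (hmv : kill Γ {v} m ≠ m) : (N ⊔ linkSubgroup Γ v).FiniteIndex := by
  classical
  have hreach (w : KillBasis Γ v × Bool) (g : RAAG Γ) :
      ∃ n ∈ N, cocycle Γ v (n * g) ∈ FreeGroup.startsWith w := by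
    obtain ⟨r, ⟨t, ht, htr⟩, hr⟩ := exists_mem_mul_mem_startsWith
      (leftTranslations_ne_bot hm hmv) (cocycle Γ v g) w
    exact ⟨t, ht, htr g ▸ hr⟩
  refine almostInvariant_halfSpace.finiteIndex_sup hfg (hreach ((1 : RAAG Γ), true)) fun g ↦ ?_
  obtain ⟨n, hn, hneg⟩ := hreach ((1 : RAAG Γ), false) g
  refine ⟨n, hn, fun hpos ↦ ?_⟩
  simpa using eq_of_mem_startsWith hneg hpos

end HalfSpace

/-! ### Normal subgroups of right-angled Artin groups -/

section InvolvedVertices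

theorem kill_eq_self_of_subset {A B : Set V} (hAB : A ⊆ B) {g : RAAG Γ} (hg : kill Γ B g = g) :
    kill Γ A g = g := by
  rw [← hg, kill_kill, Set.union_eq_right.2 hAB]

theorem exists_finite_kill_compl_eq_self (g : RAAG Γ) :
    ∃ F : Set V, F.Finite ∧ kill Γ Fᶜ g = g := by
  have hg : g ∈ Subgroup.closure (Set.range (gen Γ)) := closure_range_gen ▸ Subgroup.mem_top g
  induction hg using Subgroup.closure_induction with
  | mem g hg =>
    obtain ⟨u, rfl⟩ := hg
    exact ⟨{u}, Set.finite_singleton u, kill_gen_of_notMem (not_not.2 rfl)⟩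
  | one => exact ⟨∅, Set.finite_empty, map_one _⟩
  | mul g h _ _ ihg ihh =>
    obtain ⟨E, hE, hEg⟩ := ihg
    obtain ⟨F, hF, hFh⟩ := ihh
    refine ⟨E ∪ F, hE.union hF, ?_⟩
    rw [map_mul, kill_eq_self_of_subset (Set.compl_subset_compl.2 Set.subset_union_left) hEg,
      kill_eq_self_of_subset (Set.compl_subset_compl.2 Set.subset_union_right) hFh]
  | inv g _ ih => exact ih.imp fun F hF ↦ hF.imp_right fun h ↦ by rw [map_inv, h]

theorem kill_eq_self_of_finite {A : Set V} (hA : A.Finite) {g : RAAG Γ}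
    (hg : ∀ v ∈ A, kill Γ {v} g = g) : kill Γ A g = g := by
  induction A, hA using Set.Finite.induction_on with
  | empty =>
    obtain ⟨F, -, hF⟩ := exists_finite_kill_compl_eq_self g
    exact kill_eq_self_of_subset (Set.empty_subset _) hF
  | @insert v A _ _ ih =>
    rw [Set.forall_mem_insert] at hg
    rw [Set.insert_eq, ← kill_kill, ih hg.2, hg.1]

theorem kill_eq_self_iff {A : Set V} {g : RAAG Γ} :
    kill Γ A g = g ↔ ∀ v ∈ A, kill Γ {v} g = g := by
  refine ⟨fun hg v hv ↦ kill_eq_self_of_subset (Set.singleton_subset_iff.2 hv) hg, fun hg ↦ ?_⟩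
  obtain ⟨F, hF, hFg⟩ := exists_finite_kill_compl_eq_self g
  rw [← Set.inter_union_compl A F, ← kill_kill, kill_eq_self_of_subset Set.inter_subset_right hFg,
    kill_eq_self_of_finite (hF.inter_of_right A) fun v hv ↦ hg v hv.1]

/-- The vertices of `Γ` that have to be used to write down some element of `N`. -/
def involvedVertices (N : Subgroup (RAAG Γ)) : Set V := {v | ∃ m ∈ N, kill Γ {v} m ≠ m}

theorem kill_compl_involvedVertices {N : Subgroup (RAAG Γ)} {n : RAAG Γ} (hn : n ∈ N) :
    kill Γ (involvedVertices N)ᶜ n = n :=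
  kill_eq_self_iff.2 fun _ hv ↦ by_contra fun h ↦ hv ⟨n, hn, h⟩

theorem finite_involvedVertices {N : Subgroup (RAAG Γ)} (hN : N.FG) :
    (involvedVertices N).Finite := by
  obtain ⟨S, rfl⟩ := hN
  choose F hF hFg using exists_finite_kill_compl_eq_self (Γ := Γ)
  refine (S.finite_toSet.biUnion fun g _ ↦ hF g).subset ?_
  rintro v ⟨m, hm, hmv⟩
  by_contra hv
  simp only [Set.mem_iUnion, exists_prop, not_exists, not_and] at hv
  have hle : Subgroup.closure S ≤ (kill Γ {v}).eqLocus (MonoidHom.id _) :=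
    (Subgroup.closure_le _).2 fun g hg ↦
      kill_eq_self_of_subset (Set.singleton_subset_iff.2 (hv g hg)) (hFg g)
  exact hmv (hle hm)

end InvolvedVertices

section InducedSubgraph

variable (Γ) (S : Set V)

open scoped Classical in
/-- The retraction of `RAAG Γ` onto the right-angled Artin group of an induced subgraph. -/
noncomputable def restrict : RAAG Γ →* RAAG (Γ.induce S) :=
  lift (fun u ↦ if h : u ∈ S then gen (Γ.induce S) ⟨u, h⟩ else 1) fun s t hst ↦ by
    split_ifs
    exacts [commute_gen hst, .one_right _, .one_left _, .one_left _]

/-- The inclusion into `RAAG Γ` of the right-angled Artin group of an induced subgraph. -/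
noncomputable def extend : RAAG (Γ.induce S) →* RAAG Γ :=
  lift (fun u ↦ gen Γ u) fun _ _ hst ↦ commute_gen hst

variable {Γ S}

theorem extend_restrict (g : RAAG Γ) : extend Γ S (restrict Γ S g) = kill Γ Sᶜ g := by
  suffices (extend Γ S).comp (restrict Γ S) = kill Γ Sᶜ from DFunLike.congr_fun this g
  refine hom_ext fun u ↦ ?_
  by_cases hu : u ∈ S <;> simp [restrict, extend, kill, hu]

theorem restrict_extend (g : RAAG (Γ.induce S)) : restrict Γ S (extend Γ S g) = g := by
  suffices (restrict Γ S).comp (extend Γ S) = MonoidHom.id _ from DFunLike.congr_fun this g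
  exact hom_ext fun u ↦ by simp [restrict, extend]

theorem extend_kill (v : S) (g : RAAG (Γ.induce S)) :
    extend Γ S (kill (Γ.induce S) {v} g) = kill Γ {(v : V)} (extend Γ S g) := by
  suffices (extend Γ S).comp (kill (Γ.induce S) {v}) = (kill Γ {(v : V)}).comp (extend Γ S) from
    DFunLike.congr_fun this g
  refine hom_ext fun u ↦ ?_
  by_cases hu : u = v <;> simp [extend, kill, hu, Subtype.coe_inj]

end InducedSubgraph

section NormalSubgroup

variable {N : Subgroup (RAAG Γ)}

theorem finiteIndex_center_quotient [Finite V] {C : Subgroup (RAAG Γ)} [C.Normal]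
    (hC : ∀ v, (C ⊔ linkSubgroup Γ v).FiniteIndex) :
    (Subgroup.center (RAAG Γ ⧸ C)).FiniteIndex := by
  let π := QuotientGroup.mk' C
  have hgen : Subgroup.closure (π '' Set.range (gen Γ)) = ⊤ := by
    rw [← MonoidHom.map_closure, closure_range_gen, ← MonoidHom.range_eq_map,
      MonoidHom.range_eq_top.2 (QuotientGroup.mk'_surjective C)]
  refine finiteIndex_center_of_forall_finiteIndex_centralizer
    ((Set.finite_range (gen Γ)).image π) hgen ?_
  rintro _ ⟨_, ⟨v, rfl⟩, rfl⟩
  have hle : C ⊔ linkSubgroup Γ v ≤ (Subgroup.centralizer {π (gen Γ v)}).comap π := by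
    refine sup_le (fun c hc ↦ ?_) fun g hg ↦ ?_
    · have hπc : π c = 1 := (QuotientGroup.eq_one_iff c).2 hc
      exact Subgroup.mem_comap.2 (hπc ▸ one_mem _)
    · rw [Subgroup.mem_comap, Subgroup.mem_centralizer_singleton_iff, ← map_mul, ← map_mul,
        Subgroup.mem_centralizer_singleton_iff.1 (linkSubgroup_le_centralizer hg)]
  have := hC v
  exact ⟨Subgroup.index_comap_of_surjective _ (QuotientGroup.mk'_surjective C) ▸
    (Subgroup.finiteIndex_of_le hle).index_ne_zero⟩

theorem hereditarilyConjugacySeparable_of_forall_mem_involvedVertices [Finite V] [N.Normal]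
    (hfg : N.FG) (hN : ∀ v, v ∈ involvedVertices N) : HereditarilyConjugacySeparable N := by
  intro K hK
  have : Group.FG N := (Group.fg_iff_subgroup_fg N).2 hfg
  obtain ⟨C₀, hC₀K, hC₀, hC₀fin⟩ := exists_characteristic_finiteIndex_le K
  let C := C₀.map N.subtype
  let K' := K.map N.subtype
  have hC : C.Normal := ConjAct.normal_of_characteristic_of_normal
  have hCN : C.IsFiniteRelIndex N := ⟨by
    rw [Subgroup.relIndex, Subgroup.subgroupOf,
      Subgroup.comap_map_eq_self_of_injective N.subtype_injective]
    exact hC₀fin.index_ne_zero⟩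
  have hCK : C.IsFiniteRelIndex K' := ⟨fun h ↦ hCN.relIndex_ne_zero
    (Subgroup.relIndex_eq_zero_of_le_right (Subgroup.map_subtype_le K) h)⟩
  have hcenter : (Subgroup.center (RAAG Γ ⧸ C)).FiniteIndex := by
    refine finiteIndex_center_quotient fun v ↦ ?_
    obtain ⟨m, hm, hmv⟩ := hN v
    have := finiteIndex_sup_linkSubgroup hfg hm hmv
    exact finiteIndex_sup_of_isFiniteRelIndex (N := N)
  have hK' : ConjugacySeparable K' := (liftsConjugators Γ).conjugacySeparable_subgroup fun y ↦
    profinitelyClosed_mul_of_finiteIndex_center_quotient (Subgroup.map_mono hC₀K) _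
  exact hK'.of_mulEquiv (K.equivMapOfInjective N.subtype N.subtype_injective)

theorem hereditarilyConjugacySeparable_of_normal [N.Normal] (hfg : N.FG) :
    HereditarilyConjugacySeparable N := by
  let S := involvedVertices N
  have : Finite S := (finite_involvedVertices hfg).to_subtype
  have hN : ∀ n ∈ N, extend Γ S (restrict Γ S n) = n := fun n hn ↦ by
    rw [extend_restrict, kill_compl_involvedVertices hn]
  have hsurj : Function.Surjective (restrict Γ S) := fun g ↦ ⟨_, restrict_extend g⟩
  have : (N.map (restrict Γ S)).Normal := ‹N.Normal›.map _ hsurj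
  have hinvolved : ∀ v : S, v ∈ involvedVertices (N.map (restrict Γ S)) := by
    rintro ⟨v, m, hm, hmv⟩
    refine ⟨restrict Γ S m, Subgroup.mem_map_of_mem _ hm, fun h ↦ hmv ?_⟩
    simpa only [extend_kill, hN m hm] using congrArg (extend Γ S) h
  let e : N ≃* N.map (restrict Γ S) := MulEquiv.ofBijective ((restrict Γ S).subgroupMap N)
    ⟨fun m n h ↦ Subtype.ext <| by
      simpa only [MonoidHom.subgroupMap_apply_coe, hN m m.2, hN n n.2] using
        congrArg (fun x ↦ extend Γ S x.1) h,
    (restrict Γ S).subgroupMap_surjective N⟩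
  have : Group.FG N := (Group.fg_iff_subgroup_fg N).2 hfg
  have hfg' : (N.map (restrict Γ S)).FG :=
    (Group.fg_iff_subgroup_fg _).1 (Group.fg_of_surjective e.surjective)
  exact (hereditarilyConjugacySeparable_of_forall_mem_involvedVertices hfg' hinvolved).of_mulEquiv e

end NormalSubgroup

end RAAG

theorem fg_full_normal_subgroup_of_RAAG_is_hereditarily_conjugacy_separable_general
    {V : Type} (Γ : SimpleGraph V) (N : Subgroup (RAAG Γ)) [N.Normal] (hfg : N.FG) :
    (∀ K : Subgroup ↥N, K.FiniteIndex → ConjugacySeparable ↥K) ∧ ConjugacySeparable ↥N :=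
  have h := RAAG.hereditarilyConjugacySeparable_of_normal hfg
  ⟨h, h.conjugacySeparable⟩

theorem fg_full_normal_subgroup_of_RAAG_is_hereditarily_conjugacy_separable
    {V : Type} [Fintype V] (Γ : SimpleGraph V)
    (N : Subgroup (RAAG Γ)) [N.Normal]
    (hfg : N.FG) (hfull : IsFullSubgroup Γ N) :
    (∀ K : Subgroup ↥N, K.FiniteIndex → ConjugacySeparable ↥K) ∧
      ConjugacySeparable ↥N := by
  exact fg_full_normal_subgroup_of_RAAG_is_hereditarily_conjugacy_separable_general Γ N hfg
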